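/- Let h be a nonzero harmonic function in a domain Ω ⊂ ℝⁿ. There exists C = C(n) such that for every ball B = B(x,r) with closure of B(x,8r) contained in Ω, ℋ^{n−1}( Z(h) ∩ B(x,r) ) ≤ C ( N_h(x,4r) + 1 ) r^{n−1}. -/

import Mathlib

noncomputable section

open MeasureTheory Metric Set Filter Asymptotics
open scoped Topology NNReal ENNReal RealInnerProductSpace

namespace NodalNeumann

/-- Euclidean space `ℝⁿ`. -/
abbrev Euc (n : ℕ) : Type := EuclideanSpace ℝ (Fin n)

/-- The first `n` coordinates `y'` of a point `y = (y', y'') ∈ ℝ^{n+1}`. -/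
def front {n : ℕ} (y : Euc (n + 1)) : Euc n :=
  (EuclideanSpace.equiv (Fin n) ℝ).symm fun i => y i.castSucc

/-- The last coordinate `y''` of a point `y = (y', y'') ∈ ℝ^{n+1}`. -/
def lastc {n : ℕ} (y : Euc (n + 1)) : ℝ := y (Fin.last n)

/-- `(v, a) ∈ ℝ^{n+1}` built from `v ∈ ℝⁿ` and `a ∈ ℝ`. -/
def snocVec {n : ℕ} (v : Euc n) (a : ℝ) : Euc (n + 1) :=
  (EuclideanSpace.equiv (Fin (n + 1)) ℝ).symm
    fun i => if h : i = Fin.last n then a else v (i.castPred h)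

/-- The Laplacian of `u : ℝⁿ → ℝ`. -/
def laplacian {n : ℕ} (u : Euc n → ℝ) (x : Euc n) : ℝ :=
  ∑ i : Fin n, fderiv ℝ (fun y => fderiv ℝ u y (EuclideanSpace.single i 1)) x
    (EuclideanSpace.single i 1)

/-- `u` is harmonic on `s`. -/
def HarmonicOn {n : ℕ} (u : Euc n → ℝ) (s : Set (Euc n)) : Prop :=
  ContDiffOn ℝ 2 u s ∧ ∀ x ∈ s, laplacian u x = 0

/-- `ν` is the outward unit normal vector of `Ω` at the boundary point `x`:
it is a unit vector, points out of `Ω`, `-ν` points into `Ω`, and it is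
orthogonal to the boundary at `x` (in the little-o sense). -/
def OutwardNormalAt {n : ℕ} (Ω : Set (Euc n)) (x ν : Euc n) : Prop :=
  ‖ν‖ = 1 ∧
  (∀ᶠ t : ℝ in 𝓝[>] (0 : ℝ), x + t • ν ∉ closure Ω) ∧
  (∀ᶠ t : ℝ in 𝓝[>] (0 : ℝ), x - t • ν ∈ Ω) ∧
  (fun y : Euc n => (⟪ν, y - x⟫)) =o[𝓝[frontier Ω] x] fun y => ‖y - x‖

/-- `ν` is an outward unit normal field of `Ω` along `∂Ω ∩ s`. -/
def OutwardNormalFieldOn {n : ℕ} (Ω : Set (Euc n)) (ν : Euc n → Euc n)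
    (s : Set (Euc n)) : Prop :=
  ∀ x ∈ frontier Ω ∩ s, OutwardNormalAt Ω x (ν x)

/-- The homogeneous Neumann boundary condition `∂h/∂ν = 0` on `∂Ω ∩ s`. -/
def NeumannBC {n : ℕ} (Ω : Set (Euc n)) (ν : Euc n → Euc n) (h : Euc n → ℝ)
    (s : Set (Euc n)) : Prop :=
  ∀ x ∈ frontier Ω ∩ s, DifferentiableWithinAt ℝ h (closure Ω) x ∧
    fderivWithin ℝ h (closure Ω) x (ν x) = 0

/-- `f : ℝⁿ → ℝ` is `C^{1,1}` with character `M`: differentiable with `M`-Lipschitz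
derivative (and itself `M`-Lipschitz). -/
def IsC11FunWith {n : ℕ} (M : ℝ≥0) (f : Euc n → ℝ) : Prop :=
  Differentiable ℝ f ∧ LipschitzWith M f ∧ LipschitzWith M fun x => fderiv ℝ f x

/-- `Ω ∩ B(x,r)` is, after an isometry `T` of `ℝ^{n+1}` with `T 0 = x`, the region
in the ball above the graph of a function `f` with `f 0 = 0` satisfying `P`. -/
def IsGraphBall {n : ℕ} (Ω : Set (Euc (n + 1))) (x : Euc (n + 1)) (r : ℝ)
    (P : (Euc n → ℝ) → Prop) : Prop :=
  ∃ (T : Euc (n + 1) ≃ᵃⁱ[ℝ] Euc (n + 1)) (f : Euc n → ℝ), P f ∧ T 0 = x ∧ f 0 = 0 ∧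
    Ω ∩ ball x r =
      ⇑T '' {y : Euc (n + 1) | y ∈ ball (0 : Euc (n + 1)) r ∧ f (front y) < lastc y}

/-- `∂Ω ∩ B(x,r) ∈ Lip(τ)`. -/
def LipGraphBall {n : ℕ} (Ω : Set (Euc (n + 1))) (x : Euc (n + 1)) (r τ : ℝ) : Prop :=
  IsGraphBall Ω x r fun f => LipschitzWith (Real.toNNReal τ) f

/-- `Ω` is a `C^{1,1}` domain with character `(ρ, M)`. -/
def IsC11DomainWith {n : ℕ} (Ω : Set (Euc (n + 1))) (ρ : ℝ) (M : ℝ≥0) : Prop :=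
  IsOpen Ω ∧ IsConnected Ω ∧ 0 < ρ ∧
    ∀ x ∈ frontier Ω, IsGraphBall Ω x ρ (IsC11FunWith M)

/-- `Ω` is a `C^{1,1}` domain. -/
def IsC11Domain {n : ℕ} (Ω : Set (Euc (n + 1))) : Prop :=
  ∃ (ρ : ℝ) (M : ℝ≥0), IsC11DomainWith Ω ρ M

/-- `Ω` is a Lipschitz domain with character `(ρ, M)`. -/
def IsLipDomainWith {n : ℕ} (Ω : Set (Euc (n + 1))) (ρ : ℝ) (M : ℝ≥0) : Prop :=
  IsOpen Ω ∧ IsConnected Ω ∧ 0 < ρ ∧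
    ∀ x ∈ frontier Ω, IsGraphBall Ω x ρ fun f => LipschitzWith M f

/-- The portion `∂Ω ∩ s` of the boundary has `C^{1,1}` character `(ρ, M)`. -/
def HasC11CharacterOn {n : ℕ} (Ω : Set (Euc (n + 1))) (s : Set (Euc (n + 1)))
    (ρ : ℝ) (M : ℝ≥0) : Prop :=
  0 < ρ ∧ ∀ x ∈ frontier Ω ∩ s, IsGraphBall Ω x ρ (IsC11FunWith M)

/-- `H_h(x,r) = ∫_{B(x,r) ∩ Ω} h²`. -/
def Hfun {n : ℕ} (Ω : Set (Euc n)) (h : Euc n → ℝ) (x : Euc n) (r : ℝ) : ℝ :=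
  ∫ y in ball x r ∩ Ω, h y ^ 2

/-- The doubling index `N_h(x,r) = log (H_h(x,2r) / H_h(x,r))`. -/
def Nfun {n : ℕ} (Ω : Set (Euc n)) (h : Euc n → ℝ) (x : Euc n) (r : ℝ) : ℝ :=
  Real.log (Hfun Ω h x (2 * r) / Hfun Ω h x r)

/-- Closed axis-parallel cube with centre `c` and side length `s`. -/
def cube {n : ℕ} (c : Euc n) (s : ℝ) : Set (Euc n) :=
  {y : Euc n | ∀ i, |y i - c i| ≤ s / 2}

/-- Maximal doubling index `N*_h(Q)` over the cube of centre `c` and side `s`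
(whose diameter is `√n · s`). -/
def Nstar {n : ℕ} (Ω : Set (Euc n)) (h : Euc n → ℝ) (c : Euc n) (s : ℝ) : ℝ :=
  sSup {N : ℝ | ∃ x ∈ cube c s ∩ closure Ω, ∃ r : ℝ,
    0 < r ∧ r ≤ Real.sqrt n * s ∧ N = Nfun Ω h x r}

/-- The nodal set `Z(h) = {x ∈ Ω : h x = 0}`. -/
def zeroSet {n : ℕ} (Ω : Set (Euc n)) (h : Euc n → ℝ) : Set (Euc n) :=
  {x ∈ Ω | h x = 0}

/-- `sup_s g`. -/
def supOn {α : Type*} (g : α → ℝ) (s : Set α) : ℝ := sSup (g '' s)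

/-- The open cylinder `S(x,r,t)` of radius `r` and height `t` whose lower face is
centred at `x`. -/
def cyl {n : ℕ} (x : Euc (n + 1)) (r t : ℝ) : Set (Euc (n + 1)) :=
  {y : Euc (n + 1) | ‖front y - front x‖ < r ∧ 0 < lastc y - lastc x ∧
    lastc y - lastc x < t}

/-- In the chosen coordinates (centred at `x`, with `e_n = -ν(x)`), `Ω ∩ B(x,R)`
is the region above the graph of the `τ`-Lipschitz function `f` with `f 0 = 0`. -/
def AlignedLipGraphOn {n : ℕ} (Ω : Set (Euc (n + 1))) (x : Euc (n + 1)) (R τ : ℝ)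
    (f : Euc n → ℝ) : Prop :=
  LipschitzWith (Real.toNNReal τ) f ∧ f 0 = 0 ∧
    Ω ∩ ball x R = {y ∈ ball x R | f (front (y - x)) < lastc (y - x)}

/-- `z` is the centre of one of the boundary cubes `q ∈ 𝓑_k(Q)` of the standard
construction for the cube `Q` of centre `xQ` and side `s`: the projection of `z` is
the centre of one of the `2^{k·n}` subcubes of side `s/2^k` of the projection of
`Q`, and `z` lies on `∂Ω`. The cube `q` itself is `cube z (s/2^k)`. -/
def IsBdryCubeCenter {n : ℕ} (Ω : Set (Euc (n + 1))) (xQ : Euc (n + 1)) (s : ℝ)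
    (k : ℕ) (z : Euc (n + 1)) : Prop :=
  z ∈ frontier Ω ∧ ∃ a : Fin n → ℕ, (∀ i, a i < 2 ^ k) ∧
    ∀ i : Fin n, z i.castSucc = xQ i.castSucc - s / 2 + ((a i : ℝ) + 1 / 2) * (s / 2 ^ k)

/-- The infinite cylinder `Ω₀ × ℝ ⊂ ℝ^{n+1}` over `Ω₀ ⊂ ℝⁿ`. -/
def prodDomain {n : ℕ} (Ω₀ : Set (Euc n)) : Set (Euc (n + 1)) :=
  {y : Euc (n + 1) | front y ∈ Ω₀}

/-- The harmonic extension `h(x,t) = e^{√λ t} u(x)` of `u` to `Ω₀ × ℝ`. -/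
def hExt {n : ℕ} (lam : ℝ) (u : Euc n → ℝ) : Euc (n + 1) → ℝ :=
  fun y => Real.exp (Real.sqrt lam * lastc y) * u (front y)


/-- A sequence of functions, each the derivative of the previous one. -/
def DSeq (F : ℕ → ℝ → ℝ) (I : Set ℝ) : Prop :=
  ∀ k, ∀ t ∈ I, HasDerivAt (F k) (F (k + 1) t) t

lemma rolle_seq (a b : ℝ) (m : ℕ) : ∀ (F : ℕ → ℝ → ℝ), DSeq F (Icc a b) →
    ∀ x : Fin (m + 1) → ℝ, StrictMono x → (∀ i, x i ∈ Icc a b) → (∀ i, F 0 (x i) = 0) →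
    ∃ ξ ∈ Icc a b, F m ξ = 0 := by
  induction m with
  | zero => intro F _ x _ hx h0; exact ⟨x 0, hx 0, h0 0⟩
  | succ m ih =>
    intro F hF x hmono hx h0
    have hr : ∀ i : Fin (m + 1), ∃ y ∈ Ioo (x i.castSucc) (x i.succ), F 1 y = 0 := by
      intro i
      have hlt : x i.castSucc < x i.succ := hmono (Fin.castSucc_lt_succ)
      have hsub : Icc (x i.castSucc) (x i.succ) ⊆ Icc a b :=
        Icc_subset_Icc (hx _).1 (hx _).2
      obtain ⟨c, hc, hc'⟩ := exists_hasDerivAt_eq_zero (f := F 0) (f' := F 1) hlt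
        (fun t ht => (hF 0 t (hsub ht)).continuousAt.continuousWithinAt)
        (by rw [h0, h0]) (fun t ht => hF 0 t (hsub (Ioo_subset_Icc_self ht)))
      exact ⟨c, hc, hc'⟩
    choose y hy hy0 using hr
    have hymono : StrictMono y := by
      intro i j hij
      have h1 : x i.succ ≤ x j.castSucc := hmono.monotone (by
        rw [Fin.le_def]; simp; exact hij)
      linarith [(hy i).2, (hy j).1]
    refine ih (fun k => F (k + 1)) (fun k t ht => hF (k + 1) t ht) y hymono ?_ hy0
    intro i
    exact ⟨(hx _).1.trans (hy i).1.le, (hy i).2.le.trans (hx _).2⟩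

lemma rolle_finset (a b : ℝ) (m : ℕ) (F : ℕ → ℝ → ℝ) (hF : DSeq F (Icc a b))
    (S : Finset ℝ) (hS : S.card = m + 1) (hSI : ∀ s ∈ S, s ∈ Icc a b) (h0 : ∀ s ∈ S, F 0 s = 0) :
    ∃ ξ ∈ Icc a b, F m ξ = 0 :=
  rolle_seq a b m F hF (S.orderEmbOfFin hS) (S.orderEmbOfFin hS).strictMono
    (fun i => hSI _ (S.orderEmbOfFin_mem hS i)) (fun i => h0 _ (S.orderEmbOfFin_mem hS i))

open Polynomial in
lemma interp_error (a b : ℝ) (F : ℕ → ℝ → ℝ) (hF : DSeq F (Icc a b)) {ι : Type} [DecidableEq ι] (T : Finset ι)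
    (m : ℕ) (hm : T.card = m) (x : ι → ℝ)
    (hinj : Set.InjOn x T) (hx : ∀ i ∈ T, x i ∈ Icc a b) (t : ℝ)
    (ht : t ∈ Icc a b) (htx : ∀ i ∈ T, t ≠ x i) :
    ∃ ξ ∈ Icc a b, F 0 t = (Lagrange.interpolate (T) x (fun i => F 0 (x i))).eval t
      + F m ξ / m.factorial * ∏ i ∈ T, (t - x i) := by
  set P := Lagrange.interpolate (T) x (fun i => F 0 (x i)) with hP
  set W := Lagrange.nodal (T) x with hW
  have hWt : W.eval t ≠ 0 := by
    rw [hW, Lagrange.eval_nodal, Finset.prod_ne_zero_iff]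
    intro i hi
    exact sub_ne_zero.2 (htx i hi)
  set κ := (F 0 t - P.eval t) / W.eval t with hκ
  set Q := P + C κ * W with hQ
  set G : ℕ → ℝ → ℝ := fun k s => F k s - (derivative^[k] Q).eval s with hG
  have hGD : DSeq G (Icc a b) := by
    intro k s hs
    have h2 := (derivative^[k] Q).hasDerivAt s
    rw [← Function.iterate_succ_apply' (f := derivative)] at h2
    exact (hF k s hs).sub h2
  have hnot : t ∉ (T).image x := by
    intro h
    obtain ⟨i, hi, hit⟩ := Finset.mem_image.1 h
    exact htx i hi hit.symm
  obtain ⟨ξ, hξ, h0⟩ := rolle_finset a b m G hGD (insert t ((T).image x))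
    (by rw [Finset.card_insert_of_notMem hnot, Finset.card_image_of_injOn hinj, hm])
    (by
      intro s hs
      rcases Finset.mem_insert.1 hs with rfl | hs
      · exact ht
      · obtain ⟨i, hi, rfl⟩ := Finset.mem_image.1 hs
        exact hx i hi)
    (by
      intro s hs
      rcases Finset.mem_insert.1 hs with rfl | hs
      · simp only [hG, Function.iterate_zero, id, hQ, eval_add, eval_mul, eval_C, hκ]
        field_simp
        ring
      · obtain ⟨i, hi, rfl⟩ := Finset.mem_image.1 hs
        simp only [hG, Function.iterate_zero, id, hQ, eval_add, eval_mul, eval_C, hW,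
          Lagrange.eval_nodal_at_node hi, hP, Lagrange.eval_interpolate_at_node _ hinj hi]
        ring)
  refine ⟨ξ, hξ, ?_⟩
  have hdP : derivative^[m] P = 0 := by
    apply iterate_derivative_eq_zero_of_degree_lt
    have := Lagrange.degree_interpolate_lt (fun i => F 0 (x i)) hinj
    rw [hm] at this
    exact this
  have hdW : (derivative^[m] W).eval ξ = m.factorial := by
    have hdeg : W.natDegree = m := by rw [hW, Lagrange.natDegree_nodal, hm]
    have hmon : W.Monic := Lagrange.nodal_monic
    have h1 := iterate_derivative_eq_factorial_smul_sum W m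
    have h3 : derivative^[m] W = C ((derivative^[m] W).coeff 0) := by
      apply eq_C_of_natDegree_le_zero
      have := natDegree_iterate_derivative W m
      omega
    rw [h3, eval_C, coeff_iterate_derivative]
    have : W.coeff m = 1 := by rw [← hdeg]; exact hmon
    simp [this, Nat.descFactorial_self]
  have h4 : F m ξ = κ * m.factorial := by
    have : G m ξ = F m ξ - (derivative^[m] Q).eval ξ := rfl
    rw [h0, hQ, iterate_map_add, hdP, iterate_derivative_C_mul] at this
    simp [hdW] at this
    linarith
  rw [h4, mul_div_assoc, div_self (by positivity), mul_one, ← Lagrange.eval_nodal, ← hW, hκ]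
  field_simp
  ring

/-- `log (M / |v|)`, with value `∞` at `v = 0`. -/
def ell (M v : ℝ) : ℝ≥0∞ := if v = 0 then ⊤ else ENNReal.ofReal (Real.log (M / |v|))

/-- Analytic-type bounds on `[-a, a]` with radius `3 a`. -/
def GBd (F : ℕ → ℝ → ℝ) (a M : ℝ) : Prop :=
  DSeq F (Icc (-a) a) ∧ ∀ k, ∀ t ∈ Icc (-a) a, |F k t| ≤ M * k.factorial / (3 * a) ^ k

lemma GBd.prod_le {F : ℕ → ℝ → ℝ} {a M : ℝ} (h : GBd F a M) (ha : 0 < a) {ι : Type}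
    (T : Finset ι) (m : ℕ) (hm : T.card = m) (x : ι → ℝ)
    (hx : ∀ i ∈ T, x i ∈ Icc (-a) a) (ξ : ℝ) (hξ : ξ ∈ Icc (-a) a) (hM : 0 ≤ M) :
    |F m ξ / m.factorial * ∏ i ∈ T, (0 - x i)| ≤ M * Real.exp (-m) := by
  have h1 : |∏ i ∈ T, (0 - x i)| ≤ a ^ m := by
    rw [Finset.abs_prod, ← hm]
    calc _ ≤ ∏ i ∈ T, a := Finset.prod_le_prod (fun _ _ => abs_nonneg _) (by
            intro i hi
            have := hx i hi
            rw [zero_sub, abs_neg]; exact abs_le.2 this)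
      _ = _ := by simp
  have h2 := h.2 m ξ hξ
  have hf : (0 : ℝ) < m.factorial := by positivity
  rw [abs_mul, abs_div, abs_of_pos hf]
  have h3 : |F m ξ| / m.factorial ≤ M / (3 * a) ^ m := by
    rw [div_le_iff₀ hf]
    calc _ ≤ _ := h2
      _ = _ := by ring
  calc _ ≤ M / (3 * a) ^ m * a ^ m := by gcongr
    _ = M * (1 / 3) ^ m := by
      rw [mul_pow, one_div, inv_pow]; field_simp
    _ ≤ M * Real.exp (-m) := by
      gcongr
      rw [show (-(m : ℝ)) = m * (-1) by ring, Real.exp_nat_mul]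
      gcongr
      rw [Real.exp_neg, one_div]
      gcongr
      exact Real.exp_one_lt_three.le

lemma GBd.M_pos {F : ℕ → ℝ → ℝ} {a M : ℝ} (h : GBd F a M) (ha : 0 < a) (h0 : F 0 0 ≠ 0) :
    0 < M := by
  have := h.2 0 0 ⟨by linarith, ha.le⟩
  simp at this
  exact (abs_pos.2 h0).trans_le this

lemma GBd.zeros_card {F : ℕ → ℝ → ℝ} {a M : ℝ} (h : GBd F a M) (ha : 0 < a) (h0 : F 0 0 ≠ 0)
    (S : Finset ℝ) (hS : ∀ s ∈ S, s ∈ Icc (-a) a ∧ F 0 s = 0) :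
    (S.card : ℝ) ≤ Real.log (M / |F 0 0|) := by
  have hM := h.M_pos ha h0
  obtain ⟨ξ, hξ, he⟩ := interp_error (-a) a F h.1 S S.card rfl id (by simp)
    (fun i hi => (hS i hi).1) 0 ⟨by linarith, ha.le⟩ (fun i hi h' => h0 (by
      have h2 := (hS i hi).2
      have h3 : (0 : ℝ) = i := h'
      rw [← h3] at h2
      exact h2))
  have hz : (Lagrange.interpolate S id (fun i => F 0 (id i))) = 0 := by
    rw [Lagrange.interpolate_apply]
    apply Finset.sum_eq_zero
    intro i hi
    simp [(hS i hi).2]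
  rw [hz, Polynomial.eval_zero, zero_add] at he
  have h5 := h.prod_le ha S S.card rfl id (fun i hi => (hS i hi).1) ξ hξ hM.le
  rw [← he] at h5
  have hp := abs_pos.2 h0
  rw [Real.le_log_iff_exp_le (by positivity), le_div_iff₀ hp]
  rw [Real.exp_neg] at h5
  calc _ ≤ Real.exp S.card * (M * (Real.exp S.card)⁻¹) := by gcongr
    _ = M := by field_simp

lemma GBd.zeros_encard {F : ℕ → ℝ → ℝ} {a M : ℝ} (h : GBd F a M) (ha : 0 < a) :
    (({t ∈ Icc (-a) a | F 0 t = 0}.encard : ℕ∞) : ℝ≥0∞) ≤ ell M (F 0 0) := by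
  unfold ell
  split_ifs with h0
  · exact le_top
  have hfin : {t ∈ Icc (-a) a | F 0 t = 0}.Finite := by
    by_contra hinf
    obtain ⟨S, hS, hc⟩ := Set.Infinite.exists_subset_card_eq hinf (⌊Real.log (M / |F 0 0|)⌋₊ + 1)
    have h1 := h.zeros_card ha h0 S (fun s hs => hS hs)
    rw [hc] at h1
    have := Nat.lt_floor_add_one (Real.log (M / |F 0 0|))
    push_cast at h1
    linarith
  have h1 := h.zeros_card ha h0 hfin.toFinset (fun s hs => by simpa using hs)
  rw [hfin.encard_eq_coe_toFinset_card]
  simp only [ENat.toENNReal_coe]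
  rw [← ENNReal.ofReal_natCast]
  exact ENNReal.ofReal_le_ofReal h1

lemma exists_separated (δ : ℝ) (hδ : 0 < δ) (m : ℕ) : ∀ E : Set ℝ, IsCompact E →
    ENNReal.ofReal (m * δ) < volume E →
    ∃ x : ℕ → ℝ, (∀ i ≤ m, x i ∈ E) ∧ ∀ i j, i ≤ j → j ≤ m → ((j : ℝ) - i) * δ ≤ x j - x i := by
  induction m with
  | zero =>
    intro E hE hv
    have hne : E.Nonempty := nonempty_of_measure_ne_zero (ne_of_gt (lt_of_le_of_lt (zero_le) hv))
    obtain ⟨y, hy⟩ := hne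
    refine ⟨fun _ => y, fun _ _ => hy, ?_⟩
    intro i j hij hj
    obtain rfl : j = 0 := by omega
    obtain rfl : i = 0 := by omega
    simp
  | succ m ih =>
    intro E hE hv
    have hne : E.Nonempty := nonempty_of_measure_ne_zero (ne_of_gt (lt_of_le_of_lt (zero_le) hv))
    have ht0 := hE.sInf_mem hne
    set t0 := sInf E with ht0d
    have hlb : ∀ y ∈ E, t0 ≤ y := fun y hy => csInf_le hE.bddBelow hy
    have hcov : E ⊆ Icc t0 (t0 + δ) ∪ (E ∩ Ici (t0 + δ)) := by
      intro y hy
      by_cases h : y ≤ t0 + δ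
      · exact Or.inl ⟨hlb y hy, h⟩
      · exact Or.inr ⟨hy, (not_le.1 h).le⟩
    have hv' : ENNReal.ofReal (m * δ) < volume (E ∩ Ici (t0 + δ)) := by
      have h1 := (measure_mono hcov).trans (measure_union_le (μ := volume) _ _)
      rw [Real.volume_Icc, add_sub_cancel_left] at h1
      have h2 := hv.trans_le h1
      rw [show ((m + 1 : ℕ) : ℝ) * δ = δ + m * δ by push_cast; ring,
        ENNReal.ofReal_add hδ.le (by positivity)] at h2
      exact (ENNReal.add_lt_add_iff_left ENNReal.ofReal_ne_top).1 h2
    obtain ⟨x, hx, hsep⟩ := ih _ (hE.inter_right isClosed_Ici) hv'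
    refine ⟨fun i => if i = 0 then t0 else x (i - 1), ?_, ?_⟩
    · intro i hi
      by_cases h : i = 0
      · simp [h, ht0]
      · simp only [h, if_false]
        exact (hx _ (by omega)).1
    · intro i j hij hj
      rcases Nat.eq_zero_or_pos j with rfl | hj0
      · obtain rfl : i = 0 := by omega
        simp
      · obtain ⟨j, rfl⟩ : ∃ k, j = k + 1 := ⟨j - 1, by omega⟩
        rcases Nat.eq_zero_or_pos i with rfl | hi0
        · have h1 := hsep 0 j (by omega) (by omega)
          have h2 : t0 + δ ≤ x 0 := (hx 0 (by omega)).2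
          simp
          push_cast at h1
          nlinarith
        · obtain ⟨i, rfl⟩ : ∃ k, i = k + 1 := ⟨i - 1, by omega⟩
          have h1 := hsep i j (by omega) (by omega)
          simp
          linarith

lemma prod_abs_sub (m i : ℕ) (hi : i ≤ m) :
    ∏ j ∈ (Finset.range (m + 1)).erase i, |(i : ℝ) - j| = i.factorial * (m - i).factorial := by
  induction m, hi using Nat.le_induction with
  | base =>
    rw [Finset.range_add_one, Finset.erase_insert (by simp)]
    simp
    rw [← Finset.prod_range_reflect, ← Finset.prod_range_add_one_eq_factorial]
    push_cast
    apply Finset.prod_congr rfl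
    intro j hj
    have := Finset.mem_range.1 hj
    rw [Nat.cast_sub (by omega), Nat.cast_sub (by omega)]
    push_cast
    rw [abs_of_nonneg] <;> linarith
  | succ m hm ih =>
    rw [Finset.range_add_one, Finset.erase_insert_of_ne (by omega),
      Finset.prod_insert (by simp), ih, Nat.succ_sub hm, Nat.factorial_succ]
    push_cast
    rw [Nat.cast_sub hm, abs_sub_comm, abs_of_nonneg]
    · ring
    · have : (i : ℝ) ≤ m := by exact_mod_cast hm
      linarith

lemma sum_inv_factorial (m : ℕ) :
    ∑ i ∈ Finset.range (m + 1), (1 : ℝ) / (i.factorial * (m - i).factorial)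
      = 2 ^ m / m.factorial := by
  rw [eq_div_iff (by positivity), Finset.sum_mul]
  have := Nat.sum_range_choose m
  have h2 : ((∑ i ∈ Finset.range (m + 1), m.choose i : ℕ) : ℝ) = 2 ^ m := by
    rw [this]; norm_cast
  rw [← h2, Nat.cast_sum]
  apply Finset.sum_congr rfl
  intro i hi
  rw [Nat.cast_choose ℝ (by have := Finset.mem_range.1 hi; omega)]
  ring

lemma GBd.sublevel_aux {F : ℕ → ℝ → ℝ} {a M : ℝ} (h : GBd F a M) (ha : 0 < a) (hM : 0 < M)
    (m : ℕ) (δ ε : ℝ) (hδ : 0 < δ) (hε : 0 ≤ ε) (x : ℕ → ℝ)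
    (hx : ∀ i ≤ m, x i ∈ Icc (-a) a ∧ |F 0 (x i)| ≤ ε)
    (hsep : ∀ i j, i ≤ j → j ≤ m → ((j : ℝ) - i) * δ ≤ x j - x i) :
    |F 0 0| ≤ ε * (2 * a / δ) ^ m / m.factorial + M * Real.exp (-(m + 1 : ℕ)) + ε := by
  by_cases hz : ∃ i ≤ m, (0 : ℝ) = x i
  · obtain ⟨i, hi, h0⟩ := hz
    have h1 := (hx i hi).2
    rw [← h0] at h1
    have : 0 ≤ ε * (2 * a / δ) ^ m / m.factorial := by positivity
    have : 0 ≤ M * Real.exp (-(m + 1 : ℕ)) := by positivity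
    linarith
  push Not at hz
  have habs : ∀ i ≤ m, ∀ j ≤ m, |(i : ℝ) - j| * δ ≤ |x i - x j| := by
    intro i hi j hj
    rcases le_total i j with hij | hij
    · have h1 := hsep i j hij hj
      have h2 : (i : ℝ) ≤ j := by exact_mod_cast hij
      rw [abs_sub_comm, abs_of_nonneg (by linarith), abs_sub_comm]
      exact h1.trans (le_abs_self _)
    · have h1 := hsep j i hij hi
      have h2 : (j : ℝ) ≤ i := by exact_mod_cast hij
      rw [abs_of_nonneg (by linarith)]
      exact h1.trans (le_abs_self _)
  have hinj : Set.InjOn x (Finset.range (m + 1)) := by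
    intro i hi j hj hij
    have hi' : i ≤ m := by have := Finset.mem_range.1 (Finset.mem_coe.1 hi); omega
    have hj' : j ≤ m := by have := Finset.mem_range.1 (Finset.mem_coe.1 hj); omega
    have h1 := habs i hi' j hj'
    rw [hij, sub_self, abs_zero] at h1
    have h2 : |(i : ℝ) - j| = 0 := by
      by_contra hne
      have : 0 < |(i : ℝ) - j| := lt_of_le_of_ne (abs_nonneg _) (Ne.symm hne)
      have := mul_pos this hδ
      linarith
    have h3 := sub_eq_zero.1 (abs_eq_zero.1 h2)
    exact_mod_cast h3
  obtain ⟨ξ, hξ, he⟩ := interp_error (-a) a F h.1 (Finset.range (m + 1)) (m + 1)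
    (Finset.card_range _) x hinj
    (fun i hi => (hx i (by have := Finset.mem_range.1 hi; omega)).1) 0 ⟨by linarith, ha.le⟩
    (fun i hi => hz i (by have := Finset.mem_range.1 hi; omega))
  have h5 := h.prod_le ha (Finset.range (m + 1)) (m + 1) (Finset.card_range _) x
    (fun i hi => (hx i (by have := Finset.mem_range.1 hi; omega)).1) ξ hξ hM.le
  have hP : |(Lagrange.interpolate (Finset.range (m + 1)) x (fun i => F 0 (x i))).eval 0|
      ≤ ε * (2 * a / δ) ^ m / m.factorial := by
    rw [Lagrange.interpolate_apply, Polynomial.eval_finsetSum]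
    have hterm : ∀ i ∈ Finset.range (m + 1),
        |(Polynomial.C (F 0 (x i)) * Lagrange.basis (Finset.range (m + 1)) x i).eval 0| ≤
          ε * (a / δ) ^ m * (1 / (i.factorial * (m - i).factorial)) := by
      intro i hi
      have him : i ≤ m := by have := Finset.mem_range.1 hi; omega
      rw [Polynomial.eval_mul, Polynomial.eval_C, abs_mul, mul_assoc]
      refine mul_le_mul (hx i him).2 ?_ (abs_nonneg _) hε
      rw [Lagrange.basis, Polynomial.eval_prod, Finset.abs_prod, ← prod_abs_sub m i him]
      have hc : ((Finset.range (m + 1)).erase i).card = m := by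
        rw [Finset.card_erase_of_mem hi, Finset.card_range]; rfl
      calc _ ≤ ∏ j ∈ (Finset.range (m + 1)).erase i, (a / δ * (1 / |(i : ℝ) - j|)) := by
            apply Finset.prod_le_prod (fun _ _ => abs_nonneg _)
            intro j hj
            have hjm : j ≤ m := by
              have := Finset.mem_range.1 (Finset.mem_of_mem_erase hj); omega
            have hne : j ≠ i := Finset.ne_of_mem_erase hj
            have hpos : 0 < |(i : ℝ) - j| := abs_pos.2 (sub_ne_zero.2 (by
              exact_mod_cast hne.symm))
            have h7 := habs i him j hjm
            have h8 : 0 < |x i - x j| := (mul_pos hpos hδ).trans_le h7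
            simp only [Lagrange.basisDivisor, Polynomial.eval_mul, Polynomial.eval_C,
              Polynomial.eval_sub, Polynomial.eval_X]
            rw [abs_mul, abs_inv, zero_sub, abs_neg]
            have h9 : |x j| ≤ a := abs_le.2 (hx j hjm).1
            calc _ ≤ (|(i : ℝ) - j| * δ)⁻¹ * a := by gcongr
              _ = _ := by field_simp
        _ = _ := by
          rw [Finset.prod_mul_distrib, Finset.prod_const, hc, Finset.prod_div_distrib]
          simp
    calc _ ≤ ∑ i ∈ Finset.range (m + 1), _ := Finset.abs_sum_le_sum_abs _ _
      _ ≤ _ := Finset.sum_le_sum hterm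
      _ = _ := by
        rw [← Finset.mul_sum, sum_inv_factorial, show 2 * a / δ = (a / δ) * 2 by ring, mul_pow]
        ring
  rw [he]
  exact (abs_add_le _ _).trans (by linarith)

lemma GBd.sublevel {F : ℕ → ℝ → ℝ} {a M : ℝ} (h : GBd F a M) (ha : 0 < a) (h0 : F 0 0 ≠ 0)
    (s : ℝ) (m : ℕ) (hm1 : Real.log (M / |F 0 0|) + 1 ≤ m) :
    volume {t ∈ Icc (-a) a | |F 0 t| ≤ M * Real.exp (-s)} ≤
      ENNReal.ofReal (2 * a * Real.exp 4 * Real.exp (-s / m)) := by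
  have hM := h.M_pos ha h0
  have hp := abs_pos.2 h0
  set A := Real.log (M / |F 0 0|) with hA
  have hA0 : 0 ≤ A := by
    apply Real.log_nonneg
    rw [one_le_div hp]
    have := h.2 0 0 ⟨by linarith, ha.le⟩
    simpa using this
  have hfA : |F 0 0| = M * Real.exp (-A) := by
    rw [hA, Real.exp_neg, Real.exp_log (by positivity)]
    field_simp
  have hm0 : (0 : ℝ) < m := by linarith
  set E := {t ∈ Icc (-a) a | |F 0 t| ≤ M * Real.exp (-s)} with hE
  have hcont : ContinuousOn (F 0) (Icc (-a) a) :=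
    fun t ht => (h.1 0 t ht).continuousAt.continuousWithinAt
  have hEc : IsCompact E := by
    apply IsCompact.of_isClosed_subset isCompact_Icc _ (fun t ht => ht.1)
    have := (hcont.abs).preimage_isClosed_of_isClosed isClosed_Icc
      (isClosed_Iic (a := M * Real.exp (-s)))
    exact this
  by_contra hcon
  push Not at hcon
  set lam := 2 * a * Real.exp 4 * Real.exp (-s / m) with hlam
  have hlam0 : 0 < lam := by positivity
  set δ := lam / (m + 1) with hδ
  have hδ0 : 0 < δ := by positivity
  obtain ⟨x, hx, hsep⟩ := exists_separated δ hδ0 m E hEc (by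
    refine lt_of_le_of_lt (ENNReal.ofReal_le_ofReal ?_) hcon
    rw [hδ, ← mul_div_assoc, div_le_iff₀ (by positivity)]
    nlinarith)
  have key := h.sublevel_aux ha hM m δ (M * Real.exp (-s)) hδ0 (by positivity) x
    (fun i hi => hx i hi) hsep
  have hfac : ((m : ℝ) + 1) ^ m / m.factorial ≤ Real.exp (m + 1) :=
    Real.pow_div_factorial_le_exp _ (by positivity) m
  have h1 : (2 * a / δ) ^ m / m.factorial ≤ Real.exp (1 - 3 * m + s) := by
    have : 2 * a / δ = (m + 1) * Real.exp (s / m - 4) := by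
      rw [hδ, hlam, Real.exp_sub, neg_div, Real.exp_neg]
      field_simp
    rw [this, mul_pow, mul_div_right_comm, ← Real.exp_nat_mul]
    calc _ ≤ Real.exp (m + 1) * Real.exp (m * (s / m - 4)) := by gcongr
      _ = _ := by
        rw [← Real.exp_add]
        congr 1
        field_simp
        ring
  have h2 : M * Real.exp (-s) * (2 * a / δ) ^ m / m.factorial ≤ M * Real.exp (1 - 3 * m) := by
    calc _ = M * Real.exp (-s) * ((2 * a / δ) ^ m / m.factorial) := by ring
      _ ≤ M * Real.exp (-s) * Real.exp (1 - 3 * m + s) := by gcongr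
      _ = M * Real.exp (1 - 3 * m) := by
        rw [mul_assoc, ← Real.exp_add]; congr 2; ring
  -- `s` is large, for otherwise the bound is trivial
  have hvol : volume E ≤ ENNReal.ofReal (2 * a) := by
    calc volume E ≤ volume (Icc (-a) a) := measure_mono (fun t ht => ht.1)
      _ = _ := by rw [Real.volume_Icc]; congr 1; ring
  have h3 : lam < 2 * a := by
    have := hcon.trans_le hvol
    exact (ENNReal.ofReal_lt_ofReal_iff (by positivity)).1 this
  have h4 : 4 * (m : ℝ) < s := by
    have : Real.exp (4 + -s / m) < 1 := by
      rw [Real.exp_add]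
      rw [hlam] at h3
      have : 2 * a * (Real.exp 4 * Real.exp (-s / m)) < 2 * a * 1 := by linarith
      exact lt_of_mul_lt_mul_left this (by positivity)
    rw [Real.exp_lt_one_iff] at this
    have h5 : 4 < s / m := by rw [neg_div] at this; linarith
    rwa [lt_div_iff₀ hm0] at h5
  have h6 : M * Real.exp (-(m + 1 : ℕ)) ≤ M * (Real.exp (-A) * Real.exp (-2)) := by
    rw [← Real.exp_add]
    gcongr
    push_cast
    linarith
  have h7 : M * Real.exp (1 - 3 * m) ≤ M * (Real.exp (-A) * Real.exp (-2)) := by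
    rw [← Real.exp_add]
    gcongr
    linarith
  have h8 : M * Real.exp (-s) ≤ M * (Real.exp (-A) * Real.exp (-2)) := by
    rw [← Real.exp_add]
    gcongr
    linarith
  have h9 : |F 0 0| * (1 - 3 * Real.exp (-2)) ≤ 0 := by
    have h11 : M * (Real.exp (-A) * Real.exp (-2)) = |F 0 0| * Real.exp (-2) := by
      rw [hfA]; ring
    rw [h11] at h6 h7 h8
    linarith
  have h10 : Real.exp (-2) < 1 / 4 := by
    rw [Real.exp_neg, one_div, inv_lt_inv₀ (by positivity) (by positivity)]
    have := Real.exp_one_gt_d9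
    have h2 : Real.exp 2 = Real.exp 1 * Real.exp 1 := by rw [← Real.exp_add]; norm_num
    nlinarith
  nlinarith

lemma lintegral_exp_neg (m : ℝ) (hm : 0 < m) :
    ∫⁻ s in Ioi (0 : ℝ), ENNReal.ofReal (Real.exp (-s / m)) = ENNReal.ofReal m := by
  have h1 : ∀ s : ℝ, -s / m = (-(1 / m)) * s := fun s => by ring
  simp_rw [h1]
  have hneg : -(1 / m) < 0 := by simp [hm]
  rw [← ofReal_integral_eq_lintegral_ofReal (integrableOn_exp_mul_Ioi hneg 0)
    (ae_of_all _ fun s => (Real.exp_pos _).le), integral_exp_mul_Ioi hneg]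
  simp

/-- The constant in the one-dimensional logarithmic integral estimate. -/
def K1 : ℝ := 2 + 6 * Real.exp 4

lemma GBd.lintegral_ell {F : ℕ → ℝ → ℝ} {a M : ℝ} (h : GBd F a M) (ha : 0 < a) :
    ∫⁻ t in Icc (-a) a, (1 + ell M (F 0 t)) ≤ ENNReal.ofReal (K1 * a) * (1 + ell M (F 0 0)) := by
  by_cases h0 : F 0 0 = 0
  · have : ell M (F 0 0) = ⊤ := by simp [ell, h0]
    rw [this, add_top, ENNReal.mul_top]
    · exact le_top
    · rw [Ne, ENNReal.ofReal_eq_zero, not_le]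
      unfold K1; positivity
  have hM := h.M_pos ha h0
  have hp := abs_pos.2 h0
  set A := Real.log (M / |F 0 0|) with hA
  have hle : ∀ t ∈ Icc (-a) a, |F 0 t| ≤ M := fun t ht => by simpa using h.2 0 t ht
  have hA0 : 0 ≤ A := by
    apply Real.log_nonneg
    rw [one_le_div hp]
    exact hle 0 ⟨by linarith, ha.le⟩
  have hell0 : ell M (F 0 0) = ENNReal.ofReal A := by simp [ell, h0, hA]
  have hcont : ContinuousOn (F 0) (Icc (-a) a) :=
    fun t ht => (h.1 0 t ht).continuousAt.continuousWithinAt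
  have hnull : volume {t ∈ Icc (-a) a | F 0 t = 0} = 0 := by
    apply Set.Finite.measure_zero
    have h1 := h.zeros_encard ha
    rw [hell0] at h1
    rw [← Set.encard_lt_top_iff]
    have h2 := lt_of_le_of_lt h1 ENNReal.ofReal_lt_top
    by_contra hcon
    rw [not_lt, top_le_iff] at hcon
    rw [hcon] at h2
    simp at h2
  have hae : ∀ᵐ t ∂(volume.restrict (Icc (-a) a)),
      ell M (F 0 t) = ENNReal.ofReal (Real.log (M / |F 0 t|)) := by
    rw [ae_restrict_iff' measurableSet_Icc]
    have : ∀ᵐ t ∂(volume : Measure ℝ), t ∉ {t ∈ Icc (-a) a | F 0 t = 0} :=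
      measure_eq_zero_iff_ae_notMem.1 hnull
    filter_upwards [this] with t ht hti
    have : F 0 t ≠ 0 := fun h => ht ⟨hti, h⟩
    simp [ell, this]
  have hmeas : AEMeasurable (fun t => Real.log (M / |F 0 t|)) (volume.restrict (Icc (-a) a)) := by
    have h1 : AEMeasurable (F 0) (volume.restrict (Icc (-a) a)) :=
      hcont.aemeasurable measurableSet_Icc
    exact Real.measurable_log.comp_aemeasurable ((measurable_const.aemeasurable).div
      (measurable_norm.comp_aemeasurable h1))
  have hnn : 0 ≤ᵐ[volume.restrict (Icc (-a) a)] fun t => Real.log (M / |F 0 t|) := by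
    filter_upwards [ae_restrict_mem measurableSet_Icc] with t ht
    by_cases hz : F 0 t = 0
    · simp [hz]
    · apply Real.log_nonneg
      rw [one_le_div (abs_pos.2 hz)]
      exact hle t ht
  obtain ⟨m, hm1, hm2⟩ : ∃ m : ℕ, A + 1 ≤ m ∧ (m : ℝ) ≤ A + 2 :=
    ⟨⌈A⌉₊ + 1, by push_cast; linarith [Nat.le_ceil A],
      by push_cast; linarith [Nat.ceil_lt_add_one hA0]⟩
  have hm0 : (0 : ℝ) < m := by linarith
  have hintg : ∫⁻ t in Icc (-a) a, ell M (F 0 t) ≤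
      ENNReal.ofReal (2 * a * Real.exp 4 * m) := by
    rw [lintegral_congr_ae hae, lintegral_eq_lintegral_meas_le _ hnn hmeas]
    calc _ ≤ ∫⁻ s in Ioi (0 : ℝ), ENNReal.ofReal (2 * a * Real.exp 4) *
            ENNReal.ofReal (Real.exp (-s / m)) := by
          apply setLIntegral_mono' measurableSet_Ioi
          intro s hs
          rw [← ENNReal.ofReal_mul (by positivity)]
          refine le_trans ?_ (h.sublevel ha h0 s m hm1)
          rw [Measure.restrict_apply' measurableSet_Icc]
          apply measure_mono
          rintro t ⟨ht1, ht2⟩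
          refine ⟨ht2, ?_⟩
          by_cases hz : F 0 t = 0
          · rw [hz, abs_zero]; positivity
          · have hpt := abs_pos.2 hz
            have h1 : s ≤ Real.log (M / |F 0 t|) := ht1
            rw [Real.le_log_iff_exp_le (by positivity), le_div_iff₀ hpt] at h1
            rw [Real.exp_neg, ← div_eq_mul_inv, le_div_iff₀ (Real.exp_pos _)]
            linarith
      _ = _ := by
        rw [lintegral_const_mul _ (by fun_prop), lintegral_exp_neg m hm0,
          ← ENNReal.ofReal_mul (by positivity)]
  rw [lintegral_add_left measurable_const, hell0, setLIntegral_one, Real.volume_Icc]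
  have h1 : (1 : ℝ≥0∞) + ENNReal.ofReal A = ENNReal.ofReal (1 + A) := by
    rw [ENNReal.ofReal_add zero_le_one hA0, ENNReal.ofReal_one]
  rw [h1, ← ENNReal.ofReal_mul (by unfold K1; positivity)]
  refine (add_le_add le_rfl hintg).trans ?_
  rw [← ENNReal.ofReal_add (by linarith) (by positivity)]
  apply ENNReal.ofReal_le_ofReal
  unfold K1
  have he := Real.exp_pos 4
  have : 2 * a * Real.exp 4 * m ≤ 2 * a * Real.exp 4 * (A + 2) := by gcongr
  have h3 : 0 ≤ a * A := by positivity
  have h4 : 0 ≤ a * A * Real.exp 4 := by positivity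
  have h5 : 0 ≤ a * Real.exp 4 := by positivity
  nlinarith

lemma flat_bound (b B : ℝ) (F : ℕ → ℝ → ℝ) (hF : DSeq F (Icc 0 b)) (h0 : ∀ k, F k 0 = 0) (m : ℕ)
    (hB : ∀ t ∈ Icc 0 b, |F m t| ≤ B) (j : ℕ) (hj : j ≤ m) :
    ∀ t ∈ Icc 0 b, |F (m - j) t| ≤ B * t ^ j / j.factorial := by
  induction j with
  | zero => intro t ht; simpa using hB t ht
  | succ j ih =>
    intro t ht
    have ih' := ih (by omega)
    have hk : m - j = m - (j + 1) + 1 := by omega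
    have hd : ∀ x : ℝ, HasDerivAt (fun t : ℝ => B * t ^ (j + 1) / (j + 1).factorial)
        (B * x ^ j / j.factorial) x := by
      intro x
      have := ((hasDerivAt_pow (j + 1) x).const_mul B).div_const ((j + 1).factorial : ℝ)
      convert! this using 1
      rw [Nat.factorial_succ]
      push_cast
      field_simp
    have := image_norm_le_of_norm_deriv_right_le_deriv_boundary (f := F (m - (j + 1)))
      (f' := F (m - j)) (a := 0) (b := b) (B := fun t : ℝ => B * t ^ (j + 1) / (j + 1).factorial)
      (B' := fun t : ℝ => B * t ^ j / j.factorial)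
      (fun x hx => (hF _ x hx).continuousAt.continuousWithinAt)
      (fun x hx => by
        have := (hF (m - (j + 1)) x (Ico_subset_Icc_self hx)).hasDerivWithinAt (s := Ici x)
        rwa [← hk] at this)
      (by simp [h0]) hd (fun x hx => ih' x (Ico_subset_Icc_self hx)) ht
    simpa using this

lemma flat_zero (M q : ℝ) (hq0 : 0 ≤ q) (hq : q < 1) (F : ℕ → ℝ → ℝ) (hF : DSeq F (Icc 0 1))
    (h0 : ∀ k, F k 0 = 0) (hB : ∀ k, ∀ t ∈ Icc (0 : ℝ) 1, |F k t| ≤ M * k.factorial * q ^ k) :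
    F 0 1 = 0 := by
  have h1 : ∀ m : ℕ, |F 0 1| ≤ M * q ^ m := by
    intro m
    have := flat_bound 1 _ F hF h0 m (hB m) m le_rfl 1 ⟨zero_le_one, le_rfl⟩
    rw [Nat.sub_self, one_pow, mul_one] at this
    refine this.trans (le_of_eq ?_)
    field_simp
  have h2 : Tendsto (fun m : ℕ => M * q ^ m) atTop (𝓝 (M * 0)) :=
    (tendsto_pow_atTop_nhds_zero_of_lt_one hq0 hq).const_mul M
  rw [mul_zero] at h2
  have h3 := ge_of_tendsto' h2 h1
  exact abs_eq_zero.1 (le_antisymm h3 (abs_nonneg _))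

lemma hasDerivAt_max_pow (k : ℕ) (s : ℝ) :
    HasDerivAt (fun s : ℝ => max s 0 ^ (k + 2)) ((k + 2) * max s 0 ^ (k + 1)) s := by
  rcases lt_trichotomy s 0 with hs | rfl | hs
  · rw [max_eq_right hs.le]
    have : (fun s : ℝ => max s 0 ^ (k + 2)) =ᶠ[𝓝 s] fun _ => 0 := by
      filter_upwards [Iio_mem_nhds hs] with t ht
      rw [max_eq_right (le_of_lt ht)]; simp
    simpa using (hasDerivAt_const s (0 : ℝ)).congr_of_eventuallyEq this
  · have h1 : HasDerivAt (fun s : ℝ => s ^ 2) 0 0 := by simpa using hasDerivAt_pow 2 (0 : ℝ)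
    rw [hasDerivAt_iff_isLittleO] at h1 ⊢
    simp only [max_self, sub_zero, smul_zero, ne_eq, Nat.add_eq_zero_iff, OfNat.ofNat_ne_zero,
      and_false, not_false_eq_true, zero_pow, mul_zero, one_ne_zero] at h1 ⊢
    refine IsBigO.trans_isLittleO ?_ h1
    apply IsBigO.of_bound 1
    filter_upwards [Icc_mem_nhds (show (-1 : ℝ) < 0 by norm_num) one_pos] with t ht
    have h2 : max t 0 ≤ |t| := max_le (le_abs_self t) (abs_nonneg t)
    have h3 : 0 ≤ max t 0 := le_max_right _ _
    have h4 : |t| ≤ 1 := abs_le.2 ht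
    rw [Real.norm_of_nonneg (by positivity), Real.norm_of_nonneg (by positivity), one_mul,
      ← sq_abs t, pow_add]
    calc _ ≤ 1 * |t| ^ 2 := by
          gcongr
          exact pow_le_one₀ h3 (h2.trans h4)
      _ = _ := one_mul _
  · rw [max_eq_left hs.le]
    have : (fun s : ℝ => max s 0 ^ (k + 2)) =ᶠ[𝓝 s] fun t => t ^ (k + 2) := by
      filter_upwards [Ioi_mem_nhds hs] with t ht
      rw [max_eq_left (le_of_lt ht)]
    have h1 := (hasDerivAt_pow (k + 2) s).congr_of_eventuallyEq this
    convert! h1 using 1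
    push_cast
    simp

lemma contDiff_max_pow (k : ℕ) : ContDiff ℝ 1 (fun s : ℝ => max s 0 ^ (k + 2)) := by
  rw [contDiff_one_iff_deriv]
  refine ⟨fun s => (hasDerivAt_max_pow k s).differentiableAt, ?_⟩
  have : deriv (fun s : ℝ => max s 0 ^ (k + 2)) = fun s : ℝ => ((k : ℝ) + 2) * max s 0 ^ (k + 1) :=
    funext fun s => (hasDerivAt_max_pow k s).deriv
  rw [this]
  fun_prop

section
variable {d : ℕ}

/-- The mean value kernel. -/
def phi (y : Euc d) : ℝ := max (1 - ‖y‖ ^ 2) 0 ^ 2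

/-- The potential of `phi y * y`. -/
def psi (y : Euc d) : ℝ := -(1 / 6) * max (1 - ‖y‖ ^ 2) 0 ^ 3

lemma phi_contDiff : ContDiff ℝ 1 (phi : Euc d → ℝ) :=
  (contDiff_max_pow 0).comp (contDiff_const.sub (contDiff_norm_sq ℝ))

lemma psi_contDiff : ContDiff ℝ 1 (psi : Euc d → ℝ) :=
  contDiff_const.mul ((contDiff_max_pow 1).comp (contDiff_const.sub (contDiff_norm_sq ℝ)))

lemma psi_fderiv (y v : Euc d) : fderiv ℝ psi y v = phi y * ⟪y, v⟫ := by
  have h1 : HasFDerivAt (fun y : Euc d => 1 - ‖y‖ ^ 2) (-(2 • (innerSL ℝ y))) y := by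
    have := (hasStrictFDerivAt_norm_sq y).hasFDerivAt.const_sub 1
    exact this
  have h2 := ((hasDerivAt_max_pow 1 (1 - ‖y‖ ^ 2)).comp_hasFDerivAt y h1).const_mul (-(1 / 6) : ℝ)
  have h3 : HasFDerivAt (psi : Euc d → ℝ) _ y := h2
  rw [h3.fderiv]
  simp [phi]
  ring

lemma max_eq_zero_of {y : Euc d} (hy : 1 ≤ ‖y‖) : max (1 - ‖y‖ ^ 2) 0 = 0 := by
  apply max_eq_right
  nlinarith

lemma phi_zero_of {y : Euc d} (hy : 1 ≤ ‖y‖) : phi y = 0 := by simp [phi, max_eq_zero_of hy]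
lemma psi_zero_of {y : Euc d} (hy : 1 ≤ ‖y‖) : psi y = 0 := by simp [psi, max_eq_zero_of hy]

lemma phi_compact : HasCompactSupport (phi : Euc d → ℝ) := by
  apply HasCompactSupport.intro (isCompact_closedBall (0 : Euc d) 1)
  intro y hy
  rw [mem_closedBall_zero_iff, not_le] at hy
  exact phi_zero_of hy.le

lemma psi_compact : HasCompactSupport (psi : Euc d → ℝ) := by
  apply HasCompactSupport.intro (isCompact_closedBall (0 : Euc d) 1)
  intro y hy
  rw [mem_closedBall_zero_iff, not_le] at hy
  exact psi_zero_of hy.le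

lemma phi_nonneg (y : Euc d) : 0 ≤ phi y := by unfold phi; positivity

lemma phi_le_one (y : Euc d) : phi y ≤ 1 := by
  unfold phi
  apply pow_le_one₀ (le_max_right _ _)
  apply max_le _ zero_le_one
  have := sq_nonneg ‖y‖
  linarith

lemma phi_neg (y : Euc d) : phi (-y) = phi y := by simp [phi]

lemma phi_integrable : Integrable (phi : Euc d → ℝ) :=
  phi_contDiff.continuous.integrable_of_hasCompactSupport phi_compact

/-- The mass of `phi`. -/
def c0 (d : ℕ) : ℝ := ∫ y : Euc d, phi y

lemma c0_pos : 0 < c0 d := by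
  unfold c0
  apply Continuous.integral_pos_of_hasCompactSupport_nonneg_nonzero phi_contDiff.continuous
    phi_compact (fun y => phi_nonneg y) (x := 0)
  simp [phi]

lemma exists_cutoff (k : ℕ∞) (u : Euc d → ℝ) (Ω : Set (Euc d)) (hΩ : IsOpen Ω)
    (hu : ContDiffOn ℝ k u Ω) (x : Euc d) (r R : ℝ) (hr : 0 < r) (hrR : r < R)
    (hsub : closedBall x R ⊆ Ω) :
    ∃ w : Euc d → ℝ, ContDiff ℝ k w ∧ HasCompactSupport w ∧ (∀ y ∈ closedBall x r, w y = u y) ∧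
      ∀ y, (|w y| ≤ |u y| ∧ (y ∉ closedBall x R → w y = 0)) := by
  let f : ContDiffBump x := ⟨r, R, hr, hrR⟩
  have hzero : ∀ y, y ∉ ball x R → f y = 0 := by
    intro y hy
    have : y ∉ Function.support f := by rw [f.support_eq]; exact hy
    simpa using this
  refine ⟨fun y => f y * u y, ?_, ?_, ?_, ?_⟩
  · rw [contDiff_iff_contDiffAt]
    intro y
    by_cases hy : y ∈ closedBall x R
    · exact (f.contDiff.contDiffAt).mul (hu.contDiffAt (hΩ.mem_nhds (hsub hy)))
    · have : (fun y => f y * u y) =ᶠ[𝓝 y] fun _ => 0 := by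
        filter_upwards [isClosed_closedBall.isOpen_compl.mem_nhds hy] with z hz
        rw [hzero z (fun h => hz (ball_subset_closedBall h)), zero_mul]
      exact contDiffAt_const.congr_of_eventuallyEq this
  · exact f.hasCompactSupport.mul_right
  · intro y hy
    have : f y = 1 := f.one_of_mem_closedBall hy
    simp [this]
  · intro y
    refine ⟨?_, ?_⟩
    · rw [abs_mul, abs_of_nonneg f.nonneg]
      exact mul_le_of_le_one_left (abs_nonneg _) f.le_one
    · intro hy
      simp [hzero y (fun h => hy (ball_subset_closedBall h))]
end

section
variable {d : ℕ}

lemma hasDerivAt_mean (w : Euc d → ℝ) (hw : ContDiff ℝ 1 w) (hc : HasCompactSupport w)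
    (x v : Euc d) (α β t₀ : ℝ) :
    HasDerivAt (fun t : ℝ => ∫ y, w (x + t • v + (α + β * t) • y) * phi y)
      (∫ y, fderiv ℝ w (x + t₀ • v + (α + β * t₀) • y) (v + β • y) * phi y) t₀ := by
  have hcd : Continuous (fderiv ℝ w) := hw.continuous_fderiv one_ne_zero
  obtain ⟨C, hC⟩ := hcd.bounded_above_of_compact_support (hc.fderiv ℝ)
  have hphi : Continuous (phi : Euc d → ℝ) := phi_contDiff.continuous
  have hwc : Continuous w := hw.continuous
  have hC0 : 0 ≤ C := (norm_nonneg _).trans (hC 0)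
  refine (hasDerivAt_integral_of_dominated_loc_of_deriv_le (s := univ)
    (F := fun t y => w (x + t • v + (α + β * t) • y) * phi y)
    (F' := fun t y => fderiv ℝ w (x + t • v + (α + β * t) • y) (v + β • y) * phi y)
    (bound := fun y => C * (‖v‖ + |β|) * phi y) univ_mem ?_ ?_ ?_ ?_ ?_ ?_).2
  · exact Eventually.of_forall fun t => (by fun_prop : Continuous _).aestronglyMeasurable
  · apply Continuous.integrable_of_hasCompactSupport (by fun_prop)
    exact phi_compact.mul_left
  · apply Continuous.aestronglyMeasurable
    apply Continuous.mul _ hphi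
    exact Continuous.clm_apply (by fun_prop) (by fun_prop)
  · refine ae_of_all _ fun y t _ => ?_
    rw [norm_mul, Real.norm_of_nonneg (phi_nonneg y)]
    by_cases hy : 1 ≤ ‖y‖
    · simp [phi_zero_of hy]
    · push Not at hy
      have := phi_nonneg y
      gcongr
      calc _ ≤ ‖fderiv ℝ w (x + t • v + (α + β * t) • y)‖ * ‖v + β • y‖ :=
            ContinuousLinearMap.le_opNorm _ _
        _ ≤ C * (‖v‖ + |β|) := by
          gcongr
          · exact hC _
          · refine (norm_add_le _ _).trans ?_
            gcongr
            rw [norm_smul, Real.norm_eq_abs]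
            exact mul_le_of_le_one_right (abs_nonneg _) hy.le
  · exact phi_integrable.const_mul _
  · refine ae_of_all _ fun y t _ => ?_
    have h1 : HasDerivAt (fun t : ℝ => x + t • v + (α + β * t) • y) (v + β • y) t := by
      have h2 : HasDerivAt (fun t : ℝ => t • v) ((1 : ℝ) • v) t := (hasDerivAt_id t).smul_const v
      have h3 : HasDerivAt (fun t : ℝ => α + β * t) (β * 1) t :=
        ((hasDerivAt_id t).const_mul β).const_add α
      have := (h2.const_add x).add (h3.smul_const y)
      rw [one_smul, mul_one] at this
      exact this
    have h2 : HasFDerivAt w (fderiv ℝ w (x + t • v + (α + β * t) • y))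
        (x + t • v + (α + β * t) • y) := (hw.differentiable one_ne_zero _).hasFDerivAt
    exact (h2.comp_hasDerivAt t h1).mul_const (phi y)

/-- The mean value property with kernel `phi`. -/
def MVP (Ω : Set (Euc d)) (u : Euc d → ℝ) : Prop :=
  ContinuousOn u Ω ∧ ∀ (x : Euc d) (R : ℝ), 0 < R → closedBall x (2 * R) ⊆ Ω →
    ∫ y, u (x + R • y) * phi y = c0 d * u x

lemma add_smul_mem {x y : Euc d} {R : ℝ} (hR : 0 ≤ R) (hy : ‖y‖ ≤ 1) :
    x + R • y ∈ closedBall x R := by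
  rw [mem_closedBall, dist_eq_norm, add_sub_cancel_left, norm_smul, Real.norm_of_nonneg hR]
  exact mul_le_of_le_one_right hR hy

lemma integral_congr_phi {u w : Euc d → ℝ} {x : Euc d} {R r : ℝ} (hR : 0 ≤ R) (hRr : R ≤ r)
    (h : ∀ y ∈ closedBall x r, w y = u y) :
    ∫ y, w (x + R • y) * phi y = ∫ y, u (x + R • y) * phi y := by
  congr 1
  ext y
  by_cases hy : 1 ≤ ‖y‖
  · simp [phi_zero_of hy]
  · rw [h _ (closedBall_subset_closedBall hRr (add_smul_mem hR (not_le.1 hy).le))]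

lemma laplacian_congr {u w : Euc d → ℝ} {x : Euc d} (h : w =ᶠ[𝓝 x] u) :
    laplacian w x = laplacian u x := by
  unfold laplacian
  apply Finset.sum_congr rfl
  intro i _
  have : (fun y => fderiv ℝ w y (EuclideanSpace.single i 1)) =ᶠ[𝓝 x]
      fun y => fderiv ℝ u y (EuclideanSpace.single i 1) := by
    filter_upwards [h.eventuallyEq_nhds] with y hy
    rw [hy.fderiv_eq]
  rw [this.fderiv_eq]

lemma mean_deriv_zero (w : Euc d → ℝ) (hw : ContDiff ℝ 2 w)
    (x : Euc d) (ε R : ℝ) (hε : 0 ≤ ε) (hεR : ε < R) (hlap : ∀ z ∈ ball x R, laplacian w z = 0) :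
    ∫ y, fderiv ℝ w (x + ε • y) y * phi y = 0 := by
  have hphi : Continuous (phi : Euc d → ℝ) := phi_contDiff.continuous
  have hpsi : Continuous (psi : Euc d → ℝ) := psi_contDiff.continuous
  set e : Fin d → Euc d := fun i => EuclideanSpace.single i 1 with he
  set g : Fin d → Euc d → ℝ := fun i z => fderiv ℝ w z (e i) with hg
  have hg1 : ∀ i, ContDiff ℝ 1 (g i) := fun i =>
    (hw.fderiv_right (m := 1) (by norm_num)).clm_apply contDiff_const
  have hgc : ∀ i, Continuous (g i) := fun i => (hg1 i).continuous
  have hgd : ∀ i y, HasFDerivAt (fun y => g i (x + ε • y)) (ε • fderiv ℝ (g i) (x + ε • y)) y := by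
    intro i y
    have h1 : HasFDerivAt (fun y : Euc d => x + ε • y) (ε • ContinuousLinearMap.id ℝ (Euc d)) y :=
      ((hasFDerivAt_id y).const_smul ε).const_add x
    have h2 := (((hg1 i).differentiable one_ne_zero) (x + ε • y)).hasFDerivAt.comp y h1
    convert! h2 using 1
    ext z; simp
  have hdc : ∀ i, Continuous fun y => fderiv ℝ (g i) (x + ε • y) (e i) := fun i =>
    Continuous.clm_apply (((hg1 i).continuous_fderiv one_ne_zero).comp (by fun_prop))
      continuous_const
  have hsum : ∀ y, fderiv ℝ w (x + ε • y) y * phi y =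
      ∑ i, g i (x + ε • y) * fderiv ℝ psi y (e i) := by
    intro y
    have hy : y = ∑ i, y i • e i := by
      ext j
      simp [he, Finset.sum_apply, Pi.single_apply]
    conv_lhs => rw [show fderiv ℝ w (x + ε • y) y = fderiv ℝ w (x + ε • y) (∑ i, y i • e i) by
      rw [← hy]]
    rw [map_sum, Finset.sum_mul]
    apply Finset.sum_congr rfl
    intro i _
    rw [map_smul, psi_fderiv, he]
    simp [hg, he, EuclideanSpace.inner_single_right]
    ring
  have hpsid : ∀ i, Continuous fun y => fderiv ℝ (psi : Euc d → ℝ) y (e i) := fun i =>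
    Continuous.clm_apply (psi_contDiff.continuous_fderiv one_ne_zero) continuous_const
  have hcs : ∀ i, HasCompactSupport fun y => fderiv ℝ (psi : Euc d → ℝ) y (e i) := fun i =>
    psi_compact.fderiv_apply ℝ (e i)
  have hi1 : ∀ i, Integrable fun y => g i (x + ε • y) * fderiv ℝ psi y (e i) := fun i => by
    apply Continuous.integrable_of_hasCompactSupport
    · exact ((hgc i).comp (by fun_prop)).mul (hpsid i)
    · exact (hcs i).mul_left
  have hi2 : ∀ i, Integrable fun y => ε * fderiv ℝ (g i) (x + ε • y) (e i) * psi y := fun i => by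
    apply Continuous.integrable_of_hasCompactSupport
    · exact (continuous_const.mul (hdc i)).mul hpsi
    · exact psi_compact.mul_left
  simp_rw [hsum]
  rw [integral_finsetSum _ (fun i _ => hi1 i)]
  have hparts : ∀ i, ∫ y, g i (x + ε • y) * fderiv ℝ psi y (e i) =
      - ∫ y, ε * fderiv ℝ (g i) (x + ε • y) (e i) * psi y := by
    intro i
    have h2 : ∀ y, fderiv ℝ (fun y => g i (x + ε • y)) y (e i) =
        ε * fderiv ℝ (g i) (x + ε • y) (e i) := fun y => by
      rw [(hgd i y).fderiv]; simp
    have := integral_mul_fderiv_eq_neg_fderiv_mul_of_integrable (μ := volume) (v := e i)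
      (f := fun y => g i (x + ε • y)) (g := psi) (by simp_rw [h2]; exact hi2 i) (hi1 i)
      (by
        apply Continuous.integrable_of_hasCompactSupport
        · exact ((hgc i).comp (by fun_prop)).mul hpsi
        · exact psi_compact.mul_left)
      (fun y _ => (hgd i y).differentiableAt)
      (fun y _ => psi_contDiff.differentiable one_ne_zero y)
    simp_rw [h2] at this
    exact this
  simp_rw [hparts]
  rw [Finset.sum_neg_distrib, ← integral_finsetSum _ (fun i _ => hi2 i), neg_eq_zero]
  have : ∀ y, ∑ i, ε * fderiv ℝ (g i) (x + ε • y) (e i) * psi y = 0 := by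
    intro y
    by_cases hy : 1 ≤ ‖y‖
    · simp [psi_zero_of hy]
    · have hz : x + ε • y ∈ ball x R :=
        closedBall_subset_ball hεR (add_smul_mem hε (not_le.1 hy).le)
      have h0 := hlap _ hz
      unfold laplacian at h0
      rw [← Finset.sum_mul, ← Finset.mul_sum, h0]
      simp
  simp [this]

lemma harmonic_mvp (h : Euc d → ℝ) (Ω : Set (Euc d)) (hΩ : IsOpen Ω) (hh : HarmonicOn h Ω) :
    MVP Ω h := by
  refine ⟨hh.1.continuousOn, ?_⟩
  intro x R hR hsub
  obtain ⟨w, hw, hwc, hwu, -⟩ := exists_cutoff 2 h Ω hΩ hh.1 x (3 / 2 * R) (2 * R) (by positivity)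
    (by linarith) hsub
  have hw2 : ContDiff ℝ 2 w := hw
  have hlap : ∀ z ∈ ball x (3 / 2 * R), laplacian w z = 0 := by
    intro z hz
    rw [← hh.2 z (hsub (ball_subset_closedBall (ball_subset_ball (by linarith) hz)))]
    apply laplacian_congr
    filter_upwards [isOpen_ball.mem_nhds hz] with y hy
    exact hwu y (ball_subset_closedBall hy)
  rw [← integral_congr_phi hR.le (by linarith : R ≤ 3 / 2 * R) hwu]
  have hd : ∀ ε : ℝ, HasDerivAt (fun t : ℝ => ∫ y, w (x + t • y) * phi y)
      (∫ y, fderiv ℝ w (x + ε • y) y * phi y) ε := by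
    intro ε
    have := hasDerivAt_mean w (hw2.of_le (by norm_num)) hwc x 0 0 1 ε
    simpa using this
  have hconst := constant_of_has_deriv_right_zero (a := 0) (b := R)
    (f := fun t : ℝ => ∫ y, w (x + t • y) * phi y)
    (fun t _ => (hd t).continuousAt.continuousWithinAt)
    (fun t ht => by
      have h1 := (hd t).hasDerivWithinAt (s := Ici t)
      rwa [mean_deriv_zero w hw2 x t (3 / 2 * R) ht.1 (by linarith [ht.2]) hlap] at h1)
    R ⟨hR.le, le_rfl⟩
  rw [hconst]
  simp only [zero_smul, add_zero]
  rw [integral_const_mul, hwu x (mem_closedBall_self (by positivity)), c0, mul_comm]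
end

section
variable {d : ℕ}
open scoped Convolution

lemma exists_phi_lip : ∃ K : ℝ≥0, LipschitzWith K (phi : Euc d → ℝ) :=
  ContDiff.lipschitzWith_of_hasCompactSupport phi_compact phi_contDiff one_ne_zero

lemma mvp_repr {Ω : Set (Euc d)} (hΩ : IsOpen Ω) {u : Euc d → ℝ} (hu : MVP Ω u) {x₀ : Euc d}
    {R : ℝ} (hR : 0 < R) (hsub : closedBall x₀ (4 * R) ⊆ Ω) :
    ∃ f : Euc d → ℝ, Continuous f ∧
      (∀ M, (∀ y ∈ closedBall x₀ (4 * R), |u y| ≤ M) → ∀ y, |f y| ≤ M) ∧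
      ∀ s : Euc d, ‖s‖ ≤ 1 → c0 d * u (x₀ + R • s) = ∫ y, f y * phi (s - y) := by
  obtain ⟨w, hw, -, hwu, hwb⟩ := exists_cutoff 0 u Ω hΩ (contDiffOn_zero.2 hu.1) x₀ (2 * R) (4 * R)
    (by positivity) (by linarith) hsub
  have hwc : Continuous w := hw.continuous
  refine ⟨fun y => w (x₀ + R • y), by fun_prop, ?_, ?_⟩
  · intro M hM y
    by_cases hy : x₀ + R • y ∈ closedBall x₀ (4 * R)
    · exact (hwb _).1.trans (hM _ hy)
    · dsimp only
      rw [(hwb _).2 hy, abs_zero]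
      exact (abs_nonneg _).trans (hM x₀ (mem_closedBall_self (by positivity)))
  · intro s hs
    have h1 : closedBall (x₀ + R • s) (2 * R) ⊆ Ω := by
      refine Subset.trans (closedBall_subset_closedBall' ?_) hsub
      have := add_smul_mem (x := x₀) hR.le hs
      rw [mem_closedBall] at this
      linarith
    rw [← hu.2 _ R hR h1]
    rw [← integral_congr_phi (r := R) hR.le le_rfl (w := w)]
    · rw [← integral_sub_right_eq_self (fun y => w (x₀ + R • s + R • y) * phi y) s]
      congr 1
      ext y
      rw [← phi_neg (s - y), neg_sub]
      congr 2
      rw [smul_sub]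
      abel
    · intro y hy
      apply hwu
      have := add_smul_mem (x := x₀) hR.le hs
      refine closedBall_subset_closedBall' ?_ hy
      rw [mem_closedBall] at this
      linarith

lemma mvp_contDiffOn {Ω : Set (Euc d)} (hΩ : IsOpen Ω) {u : Euc d → ℝ} (hu : MVP Ω u) :
    ContDiffOn ℝ 1 u Ω := by
  intro x₀ hx
  apply ContDiffAt.contDiffWithinAt
  obtain ⟨ε, hε, hball⟩ := Metric.nhds_basis_closedBall.mem_iff.1 (hΩ.mem_nhds hx)
  have hR : 0 < ε / 4 := by positivity
  set R := ε / 4 with hRdef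
  obtain ⟨f, hf, -, hrep⟩ := mvp_repr hΩ hu (x₀ := x₀) hR (by rwa [show 4 * R = ε by rw [hRdef]; ring])
  have h1 : ContDiff ℝ 1 (f ⋆[ContinuousLinearMap.mul ℝ ℝ, volume] (phi : Euc d → ℝ)) :=
    phi_compact.contDiff_convolution_right _ hf.locallyIntegrable phi_contDiff
  have h2 : ContDiff ℝ 1 fun x => (c0 d)⁻¹ *
      (f ⋆[ContinuousLinearMap.mul ℝ ℝ, volume] (phi : Euc d → ℝ)) (R⁻¹ • (x - x₀)) :=
    contDiff_const.mul (h1.comp (by fun_prop))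
  refine h2.contDiffAt.congr_of_eventuallyEq ?_
  filter_upwards [closedBall_mem_nhds x₀ hR] with x hx
  have hs : ‖R⁻¹ • (x - x₀)‖ ≤ 1 := by
    rw [norm_smul, Real.norm_of_nonneg (by positivity), inv_mul_le_iff₀ hR, mul_one, ← dist_eq_norm]
    exact hx
  have := hrep _ hs
  rw [smul_inv_smul₀ hR.ne', add_sub_cancel] at this
  rw [eq_inv_mul_iff_mul_eq₀ c0_pos.ne', this]
  rfl

lemma exists_grad_const (d : ℕ) : ∃ Cg : ℝ, 0 < Cg ∧ ∀ (Ω : Set (Euc d)), IsOpen Ω →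
    ∀ u : Euc d → ℝ, MVP Ω u → ∀ (x₀ : Euc d) (R M : ℝ), 0 < R → closedBall x₀ R ⊆ Ω →
    (∀ y ∈ closedBall x₀ R, |u y| ≤ M) → ‖fderiv ℝ u x₀‖ ≤ Cg * M / R := by
  obtain ⟨K, hK⟩ := exists_phi_lip (d := d)
  set V : ℝ := (volume : Measure (Euc d)).real (closedBall 0 2) with hV
  refine ⟨(c0 d)⁻¹ * (K * V) * 4 + 1, by have := c0_pos (d := d); positivity, ?_⟩
  intro Ω hΩ u hu x₀ R' M hR' hsub hM
  have hM0 : 0 ≤ M := (abs_nonneg _).trans (hM x₀ (mem_closedBall_self (by positivity)))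
  have hc := c0_pos (d := d)
  set R := R' / 4 with hR
  have hR0 : 0 < R := by positivity
  have hRR : 4 * R = R' := by rw [hR]; ring
  obtain ⟨f, hf, hfM, hrep⟩ := mvp_repr hΩ hu (x₀ := x₀) hR0 (by rwa [hRR])
  have hfM' := hfM M (by rwa [hRR])
  have hmain : ∀ x ∈ closedBall x₀ R, ‖u x - u x₀‖ ≤ (c0 d)⁻¹ * (K * V) * M / R * ‖x - x₀‖ := by
    intro x hx
    have hs : ‖R⁻¹ • (x - x₀)‖ ≤ 1 := by
      rw [norm_smul, Real.norm_of_nonneg (by positivity), inv_mul_le_iff₀ hR0, mul_one,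
        ← dist_eq_norm]
      exact hx
    set s := R⁻¹ • (x - x₀) with hsdef
    have h1 := hrep s hs
    have h2 := hrep 0 (by simp)
    rw [hsdef, smul_inv_smul₀ hR0.ne', add_sub_cancel, ← hsdef] at h1
    rw [smul_zero, add_zero] at h2
    have hintg : ∀ s : Euc d, Integrable fun y => f y * phi (s - y) := by
      intro s
      apply Continuous.integrable_of_hasCompactSupport
      · have hph : Continuous (phi : Euc d → ℝ) := phi_contDiff.continuous
        fun_prop
      · apply HasCompactSupport.mul_left
        exact phi_compact.comp_homeomorph (Homeomorph.subLeft s)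
    have h3 : c0 d * (u x - u x₀) = ∫ y, f y * (phi (s - y) - phi (0 - y)) := by
      rw [mul_sub, h1, h2, ← integral_sub (hintg s) (hintg 0)]
      congr 1; ext y; ring
    have h4 : ∫ y, f y * (phi (s - y) - phi (0 - y)) =
        ∫ y in closedBall 0 2, f y * (phi (s - y) - phi (0 - y)) := by
      symm
      apply setIntegral_eq_integral_of_forall_compl_eq_zero
      intro y hy
      rw [mem_closedBall_zero_iff, not_le] at hy
      rw [phi_zero_of (y := s - y), phi_zero_of (y := 0 - y)]
      · simp
      · rw [zero_sub, norm_neg]; linarith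
      · have := norm_sub_norm_le y s
        rw [norm_sub_rev] at this
        linarith
    have h5 : ‖∫ y in closedBall (0 : Euc d) 2, f y * (phi (s - y) - phi (0 - y))‖ ≤
        (M * (K * ‖s‖)) * V := by
      apply norm_setIntegral_le_of_norm_le_const
      · exact (isCompact_closedBall _ _).measure_lt_top
      · intro y _
        rw [norm_mul]
        gcongr
        · exact hfM' y
        · have := hK.dist_le_mul (s - y) (0 - y)
          rw [Real.dist_eq, dist_eq_norm] at this
          simpa using this
    rw [← h4, ← h3, norm_mul, Real.norm_of_nonneg hc.le] at h5
    rw [← le_inv_mul_iff₀ hc] at h5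
    refine h5.trans (le_of_eq ?_)
    rw [hsdef, norm_smul, norm_inv, Real.norm_of_nonneg hR0.le]
    field_simp
  have := norm_fderiv_le_of_lip' ℝ (f := u) (x₀ := x₀) (C := (c0 d)⁻¹ * (K * V) * M / R)
    (by positivity) (by filter_upwards [closedBall_mem_nhds x₀ hR0] with x hx using hmain x hx)
  refine this.trans ?_
  rw [hR, show (c0 d)⁻¹ * (K * V) * M / (R' / 4) = ((c0 d)⁻¹ * (K * V) * 4) * M / R' by field_simp]
  gcongr
  linarith

lemma mvp_fderiv {Ω : Set (Euc d)} (hΩ : IsOpen Ω) {u : Euc d → ℝ} (hu : MVP Ω u) (v : Euc d) :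
    MVP Ω (fun x => fderiv ℝ u x v) := by
  have hcd := mvp_contDiffOn hΩ hu
  refine ⟨(hcd.continuousOn_fderiv_of_isOpen hΩ le_rfl).clm_apply continuousOn_const, ?_⟩
  intro x R hR hsub
  obtain ⟨δ, hδ, hδs⟩ := (isCompact_closedBall x (2 * R)).exists_cthickening_subset_open hΩ hsub
  rw [cthickening_closedBall hδ.le (by positivity)] at hδs
  obtain ⟨w, hw, hwc, hwu, -⟩ := exists_cutoff 1 u Ω hΩ hcd x (2 * R) (δ + 2 * R) (by positivity)
    (by linarith) hδs
  have h1 := hasDerivAt_mean w hw hwc x v R 0 0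
  simp only [zero_mul, add_zero, zero_smul] at h1
  have hxΩ : x ∈ Ω := hsub (mem_closedBall_self (by positivity))
  have h2 : HasDerivAt (fun t : ℝ => c0 d * u (x + t • v)) (c0 d * fderiv ℝ u x v) 0 := by
    have h3 : HasFDerivAt u (fderiv ℝ u x) (x + (0 : ℝ) • v) := by
      rw [zero_smul, add_zero]
      exact ((hcd.contDiffAt (hΩ.mem_nhds hxΩ)).differentiableAt one_ne_zero).hasFDerivAt
    have h4 : HasDerivAt (fun t : ℝ => x + t • v) ((1 : ℝ) • v) 0 :=
      ((hasDerivAt_id (0 : ℝ)).smul_const v).const_add x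
    rw [one_smul] at h4
    exact (h3.comp_hasDerivAt 0 h4).const_mul (c0 d)
  have h3 : (fun t : ℝ => ∫ y, w (x + t • v + R • y) * phi y) =ᶠ[𝓝 0]
      fun t : ℝ => c0 d * u (x + t • v) := by
    have hcont : ContinuousAt (fun t : ℝ => ‖t • v‖) 0 := by fun_prop
    have hlt : ∀ ε, 0 < ε → ∀ᶠ t : ℝ in 𝓝 0, ‖t • v‖ < ε := fun ε hε =>
      hcont.eventually_lt continuousAt_const (by simpa using hε)
    filter_upwards [hlt R hR, hlt δ hδ] with t ht1 ht2
    have hd : dist (x + t • v) x = ‖t • v‖ := by rw [dist_eq_norm, add_sub_cancel_left]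
    rw [integral_congr_phi (u := u) (r := R) hR.le le_rfl]
    · apply hu.2 _ R hR
      exact (closedBall_subset_closedBall' (by rw [hd]; linarith)).trans hδs
    · intro y hy
      apply hwu
      exact closedBall_subset_closedBall' (by rw [hd]; linarith) hy
  have h4 := (h1.congr_of_eventuallyEq h3.symm).unique h2
  rw [← h4]
  congr 1
  ext y
  by_cases hy : 1 ≤ ‖y‖
  · simp [phi_zero_of hy]
  · have hm : x + R • y ∈ ball x (2 * R) :=
      closedBall_subset_ball (by linarith) (add_smul_mem hR.le (not_le.1 hy).le)
    have : w =ᶠ[𝓝 (x + R • y)] u := by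
      filter_upwards [isOpen_ball.mem_nhds hm] with z hz
      exact hwu z (ball_subset_closedBall hz)
    rw [this.fderiv_eq]

/-- Iterated directional derivatives. -/
def Dk (v : Euc d) (u : Euc d → ℝ) : ℕ → Euc d → ℝ
  | 0 => u
  | k + 1 => fun x => fderiv ℝ (Dk v u k) x v

lemma Dk_mvp {Ω : Set (Euc d)} (hΩ : IsOpen Ω) {u : Euc d → ℝ} (hu : MVP Ω u) (v : Euc d) (k : ℕ) :
    MVP Ω (Dk v u k) := by
  induction k with
  | zero => exact hu
  | succ k ih => exact mvp_fderiv hΩ ih v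

lemma Dk_hasDerivAt {Ω : Set (Euc d)} (hΩ : IsOpen Ω) {u : Euc d → ℝ} (hu : MVP Ω u) (v : Euc d)
    (k : ℕ) (y : Euc d) (t : ℝ) (ht : y + t • v ∈ Ω) :
    HasDerivAt (fun t : ℝ => Dk v u k (y + t • v)) (Dk v u (k + 1) (y + t • v)) t := by
  have h3 : HasFDerivAt (Dk v u k) (fderiv ℝ (Dk v u k) (y + t • v)) (y + t • v) :=
    (((mvp_contDiffOn hΩ (Dk_mvp hΩ hu v k)).contDiffAt (hΩ.mem_nhds ht)).differentiableAt
      one_ne_zero).hasFDerivAt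
  have h4 : HasDerivAt (fun t : ℝ => y + t • v) ((1 : ℝ) • v) t :=
    ((hasDerivAt_id t).smul_const v).const_add y
  rw [one_smul] at h4
  exact h3.comp_hasDerivAt t h4

lemma exists_Dk_const (d : ℕ) : ∃ A : ℝ, 0 < A ∧ ∀ (Ω : Set (Euc d)), IsOpen Ω →
    ∀ u : Euc d → ℝ, MVP Ω u → ∀ (v x₀ : Euc d) (R M : ℝ), 0 < R → closedBall x₀ R ⊆ Ω →
    (∀ y ∈ closedBall x₀ R, |u y| ≤ M) → ∀ k : ℕ,
    |Dk v u k x₀| ≤ M * k.factorial * (A * ‖v‖ / R) ^ k := by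
  obtain ⟨Cg, hCg, hgrad⟩ := exists_grad_const d
  refine ⟨Cg * Real.exp 1, by positivity, ?_⟩
  intro Ω hΩ u hu v x₀ R M hR hsub hM k
  have hM0 : 0 ≤ M := (abs_nonneg _).trans (hM x₀ (mem_closedBall_self (by positivity)))
  have key : ∀ δ : ℝ, 0 < δ → ∀ j : ℕ, ∀ y ∈ closedBall x₀ (R - j * δ),
      |Dk v u j y| ≤ M * (Cg * ‖v‖ / δ) ^ j := by
    intro δ hδ j
    induction j with
    | zero => intro y hy; simpa [Dk] using hM y (by simpa using hy)
    | succ j ih =>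
      intro y hy
      have h1 : closedBall y δ ⊆ closedBall x₀ (R - j * δ) := by
        apply closedBall_subset_closedBall'
        rw [mem_closedBall] at hy
        push_cast at hy
        linarith
      have h2 : closedBall y δ ⊆ Ω := h1.trans ((closedBall_subset_closedBall
        (by have : 0 ≤ j * δ := by positivity
            linarith)).trans hsub)
      have h3 := hgrad Ω hΩ _ (Dk_mvp hΩ hu v j) y δ _ hδ h2 (fun z hz => ih z (h1 hz))
      have h4 : |Dk v u (j + 1) y| ≤ ‖fderiv ℝ (Dk v u j) y‖ * ‖v‖ :=
        (fderiv ℝ (Dk v u j) y).le_opNorm v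
      refine h4.trans ((mul_le_mul_of_nonneg_right h3 (norm_nonneg _)).trans (le_of_eq ?_))
      rw [pow_succ]
      ring
  rcases Nat.eq_zero_or_pos k with rfl | hk
  · simpa [Dk] using hM x₀ (mem_closedBall_self hR.le)
  have hk' : (0 : ℝ) < k := by exact_mod_cast hk
  have h1 := key (R / k) (by positivity) k x₀ (by
    rw [mul_div_cancel₀ _ hk'.ne', sub_self]; exact mem_closedBall_self le_rfl)
  refine h1.trans ?_
  rw [mul_assoc]
  gcongr
  have h2 : (k : ℝ) ^ k ≤ k.factorial * Real.exp 1 ^ k := by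
    have := Real.pow_div_factorial_le_exp (k : ℝ) hk'.le k
    rw [div_le_iff₀ (by positivity)] at this
    rw [← Real.exp_nat_mul, mul_one, mul_comm]
    exact this
  calc (Cg * ‖v‖ / (R / k)) ^ k = (Cg * ‖v‖ / R) ^ k * (k : ℝ) ^ k := by
        rw [← mul_pow]; congr 1; field_simp
    _ ≤ (Cg * ‖v‖ / R) ^ k * (k.factorial * Real.exp 1 ^ k) := by gcongr
    _ = _ := by rw [show Cg * Real.exp 1 * ‖v‖ / R = (Cg * ‖v‖ / R) * Real.exp 1 by ring, mul_pow]
                ring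

end

section
variable {d : ℕ}

lemma flat_vanish {Ω : Set (Euc d)} (hΩ : IsOpen Ω) {u : Euc d → ℝ} (hu : MVP Ω u) {z : Euc d}
    (hz : z ∈ Ω) (h0 : ∀ i k : ℕ, Dk (TopologicalSpace.denseSeq (Euc d) i) u k z = 0) :
    u =ᶠ[𝓝 z] 0 := by
  obtain ⟨A, hA, hbd⟩ := exists_Dk_const d
  obtain ⟨ε, hε, hball⟩ := Metric.nhds_basis_closedBall.mem_iff.1 (hΩ.mem_nhds hz)
  obtain ⟨M, hM⟩ := (isCompact_closedBall z ε).exists_bound_of_continuousOn (hu.1.mono hball)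
  set R := ε / 2 with hR
  have hR0 : 0 < R := by positivity
  set η := min R (R / (2 * A)) with hη
  have hη0 : 0 < η := by positivity
  have hηR : η ≤ R := min_le_left _ _
  have hηA : A * η ≤ R / 2 := by
    calc A * η ≤ A * (R / (2 * A)) := by gcongr; exact min_le_right _ _
      _ = R / 2 := by field_simp
  have key : ∀ i : ℕ, ‖TopologicalSpace.denseSeq (Euc d) i‖ < η →
      u (z + TopologicalSpace.denseSeq (Euc d) i) = 0 := by
    intro i hi
    set v := TopologicalSpace.denseSeq (Euc d) i with hv
    have hin : ∀ t ∈ Icc (0 : ℝ) 1, closedBall (z + t • v) R ⊆ closedBall z ε := by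
      intro t ht
      apply closedBall_subset_closedBall'
      rw [dist_eq_norm, add_sub_cancel_left, norm_smul, Real.norm_of_nonneg ht.1]
      have : t * ‖v‖ ≤ 1 * ‖v‖ := by gcongr; exact ht.2
      rw [hR] at *
      linarith
    have := flat_zero M (1 / 2) (by norm_num) (by norm_num) (fun k t => Dk v u k (z + t • v))
      (fun k t ht => Dk_hasDerivAt hΩ hu v k z t
        (hball (hin t ht (mem_closedBall_self hR0.le)))) (fun k => by simpa using h0 i k)
      (fun k t ht => by
        have h1 := hbd Ω hΩ u hu v (z + t • v) R M hR0 ((hin t ht).trans hball)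
          (fun y hy => hM y (hin t ht hy)) k
        have hM0 : 0 ≤ M := (norm_nonneg _).trans (hM z (mem_closedBall_self hε.le))
        have h2 : A * ‖v‖ / R ≤ 1 / 2 := by
          rw [div_le_iff₀ hR0]
          have : A * ‖v‖ ≤ A * η := by gcongr
          linarith
        exact h1.trans (mul_le_mul_of_nonneg_left (pow_le_pow_left₀ (by positivity) h2 k)
          (by positivity)))
    simpa [Dk] using this
  filter_upwards [ball_mem_nhds z hη0] with y hy
  by_contra hne
  have hyΩ : y ∈ Ω := hball (ball_subset_closedBall (ball_subset_ball (by rw [hR] at *; linarith) hy))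
  have hev : ∀ᶠ w in 𝓝 y, w ∈ ball z η ∧ u w ≠ 0 :=
    (isOpen_ball.eventually_mem hy).and ((hu.1.continuousAt (hΩ.mem_nhds hyΩ)).eventually_ne hne)
  have hev2 : ∀ᶠ v in 𝓝 (y - z), z + v ∈ ball z η ∧ u (z + v) ≠ 0 := by
    have : Tendsto (fun v => z + v) (𝓝 (y - z)) (𝓝 y) := by
      have h : ContinuousAt (fun v => z + v) (y - z) := by fun_prop
      simpa [ContinuousAt] using h
    exact this.eventually hev
  obtain ⟨i, hi1, hi2⟩ := (TopologicalSpace.denseRange_denseSeq (Euc d)).exists_mem_open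
    isOpen_interior ⟨y - z, mem_interior_iff_mem_nhds.2 hev2⟩ |>.imp
      fun i hi => interior_subset hi
  exact hi2 (key i (by simpa using hi1))

lemma Dk_eventually_zero {u : Euc d → ℝ} {z : Euc d} (h : u =ᶠ[𝓝 z] 0) (v : Euc d) (k : ℕ) :
    Dk v u k =ᶠ[𝓝 z] 0 := by
  induction k with
  | zero => exact h
  | succ k ih =>
    filter_upwards [ih.eventuallyEq_nhds] with y hy
    simp [Dk, hy.fderiv_eq]

lemma exists_nonflat {Ω : Set (Euc d)} (hΩ : IsOpen Ω) (hc : IsConnected Ω) {u : Euc d → ℝ}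
    (hu : MVP Ω u) (hne : ∃ y ∈ Ω, u y ≠ 0) {z : Euc d} (hz : z ∈ Ω) :
    ∃ i k : ℕ, Dk (TopologicalSpace.denseSeq (Euc d) i) u k z ≠ 0 := by
  by_contra hcon
  push Not at hcon
  have hz0 := flat_vanish hΩ hu hz hcon
  have hsub : Ω ⊆ {z | u =ᶠ[𝓝 z] 0} := by
    apply hc.isPreconnected.subset_of_closure_inter_subset
    · exact isOpen_setOfPred_eventually_nhds
    · exact ⟨z, hz, hz0⟩
    · rintro y ⟨hy, hyΩ⟩
      apply flat_vanish hΩ hu hyΩ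
      intro i k
      by_contra hyne
      have hev := ((Dk_mvp hΩ hu (TopologicalSpace.denseSeq (Euc d) i) k).1.continuousAt
        (hΩ.mem_nhds hyΩ)).eventually_ne hyne
      obtain ⟨w, hw1, hw2⟩ := mem_closure_iff_nhds.1 hy _ hev
      exact hw1 (Dk_eventually_zero hw2 _ k).self_of_nhds
  obtain ⟨y, hy, hyne⟩ := hne
  exact hyne (hsub hy).self_of_nhds

lemma exists_regular {Ω : Set (Euc d)} (hΩ : IsOpen Ω) (hc : IsConnected Ω) {u : Euc d → ℝ}
    (hu : MVP Ω u) (hne : ∃ y ∈ Ω, u y ≠ 0) {z : Euc d} (hz : z ∈ Ω) (h0 : u z = 0) :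
    ∃ i k : ℕ, Dk (TopologicalSpace.denseSeq (Euc d) i) u k z = 0 ∧
      fderiv ℝ (Dk (TopologicalSpace.denseSeq (Euc d) i) u k) z ≠ 0 := by
  classical
  obtain ⟨i, hk⟩ := exists_nonflat hΩ hc hu hne hz
  set v := TopologicalSpace.denseSeq (Euc d) i
  have hfind := Nat.find_spec hk
  rcases hm : Nat.find hk with _ | m
  · rw [hm] at hfind; exact absurd h0 hfind
  · rw [hm] at hfind
    refine ⟨i, m, ?_, ?_⟩
    · have := Nat.find_min hk (m := m) (by omega)
      simpa using this
    · intro h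
      apply hfind
      simp only [Dk]
      rw [h]; rfl

end

section
variable {d : ℕ}

/-- `h` restricted to unit-speed lines through points of `P` obeys factorial bounds. -/
def LineBd (h : Euc d → ℝ) (P : Set (Euc d)) (a M : ℝ) : Prop :=
  ∀ y ∈ P, ∀ v : Euc d, ‖v‖ = 1 → ∃ F : ℕ → ℝ → ℝ, GBd F a M ∧ ∀ t, F 0 t = h (y + t • v)

lemma K1_ge : 2 ≤ K1 := by unfold K1; have := Real.exp_pos 4; linarith

lemma LineBd.lintegral {h : Euc d → ℝ} {P : Set (Euc d)} {a M : ℝ} (hL : LineBd h P a M)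
    (ha : 0 < a) {p : Euc d} (hp : p ∈ P) {v : Euc d} (hv : ‖v‖ = 1) :
    ∫⁻ t in Icc (-a) a, (1 + ell M (h (p + t • v))) ≤
      ENNReal.ofReal (K1 * a) * (1 + ell M (h p)) := by
  obtain ⟨F, hF, hF0⟩ := hL p hp v hv
  have := hF.lintegral_ell ha
  simp only [hF0, zero_smul, add_zero] at this
  exact this

lemma chain_step {h : Euc d → ℝ} {P : Set (Euc d)} {a M η : ℝ} (hL : LineBd h P a M)
    (ha : 0 < a) (hη : 0 < η) (hηa : 2 * η ≤ a) {p q : Euc d} (hp : p ∈ P) (hD : η ≤ dist p q) :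
    ∃ p', dist p' q ≤ max (dist p q - η) η ∧
      1 + ell M (h p') ≤ ENNReal.ofReal (2 * K1 * a / η) * (1 + ell M (h p)) := by
  have hD0 : 0 < dist p q := lt_of_lt_of_le hη hD
  have hK := K1_ge
  set D := dist p q with hDdef
  set v : Euc d := D⁻¹ • (q - p) with hv
  have hvn : ‖v‖ = 1 := by
    rw [hv, norm_smul, norm_inv, Real.norm_of_nonneg hD0.le, ← dist_eq_norm, dist_comm, ← hDdef,
      inv_mul_cancel₀ hD0.ne']
  have hqp : q = p + D • v := by rw [hv, smul_inv_smul₀ hD0.ne']; abel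
  have hintg := hL.lintegral ha hp hvn
  have hex : ∃ t ∈ Icc η (2 * η), 1 + ell M (h (p + t • v)) ≤
      ENNReal.ofReal (2 * K1 * a / η) * (1 + ell M (h p)) := by
    by_contra hcon
    push Not at hcon
    set c := ENNReal.ofReal (2 * K1 * a / η) * (1 + ell M (h p)) with hc
    have hcfin : c ≠ ⊤ := by
      intro h1
      have := hcon η ⟨le_rfl, by linarith⟩
      rw [h1] at this
      exact not_top_lt this
    have h1 : c * ENNReal.ofReal η ≤ ∫⁻ t in Icc (-a) a, (1 + ell M (h (p + t • v))) := by
      calc c * ENNReal.ofReal η = ∫⁻ _ in Icc η (2 * η), c := by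
            rw [setLIntegral_const, Real.volume_Icc]; congr 2; ring
        _ ≤ ∫⁻ t in Icc η (2 * η), (1 + ell M (h (p + t • v))) :=
            setLIntegral_mono' measurableSet_Icc fun t ht => (hcon t ht).le
        _ ≤ _ := lintegral_mono_set (Icc_subset_Icc (by linarith) hηa)
    have h2 : ENNReal.ofReal (K1 * a) * (1 + ell M (h p)) < c * ENNReal.ofReal η := by
      have h3 : c * ENNReal.ofReal η = 2 * (ENNReal.ofReal (K1 * a) * (1 + ell M (h p))) := by
        rw [hc, mul_right_comm, ← ENNReal.ofReal_mul (by positivity), div_mul_cancel₀ _ hη.ne',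
          mul_assoc, ENNReal.ofReal_mul (by norm_num), mul_assoc]
        simp
      have hX0 : ENNReal.ofReal (K1 * a) * (1 + ell M (h p)) ≠ 0 := by
        apply mul_ne_zero
        · simp only [ne_eq, ENNReal.ofReal_eq_zero, not_le]; positivity
        · simp
      have hXt : ENNReal.ofReal (K1 * a) * (1 + ell M (h p)) ≠ ⊤ := by
        intro h4
        rw [h4] at h3
        exact (ENNReal.mul_ne_top hcfin ENNReal.ofReal_ne_top) (by rw [h3]; simp)
      rw [h3, two_mul]
      exact ENNReal.lt_add_right hXt hX0
    exact absurd (h1.trans hintg) (not_le.2 h2)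
  obtain ⟨t, ht, hle⟩ := hex
  refine ⟨p + t • v, ?_, hle⟩
  rw [hqp, dist_add_left, dist_eq_norm, ← sub_smul, norm_smul, hvn, mul_one, Real.norm_eq_abs,
    abs_le]
  constructor
  · have := le_max_left (D - η) η
    linarith [ht.1]
  · have := le_max_right (D - η) η
    linarith [ht.2]

lemma chain {h : Euc d → ℝ} {P : Set (Euc d)} {a M η : ℝ} (hL : LineBd h P a M)
    (ha : 0 < a) (hη : 0 < η) (hηa : 2 * η ≤ a) (q : Euc d) (m : ℕ) : ∀ p : Euc d,
    closedBall q (dist p q) ⊆ P → dist p q ≤ (m + 1) * η →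
    ∃ p', dist p' q ≤ η ∧
      1 + ell M (h p') ≤ ENNReal.ofReal (2 * K1 * a / η) ^ m * (1 + ell M (h p)) := by
  have hK := K1_ge
  have hB : 1 ≤ ENNReal.ofReal (2 * K1 * a / η) := by
    rw [ENNReal.one_le_ofReal, le_div_iff₀ hη]
    nlinarith
  induction m with
  | zero => intro p _ hp2; exact ⟨p, by simpa using hp2, by simp⟩
  | succ m ih =>
    intro p hp1 hp2
    rcases le_total (dist p q) η with hD | hD
    · exact ⟨p, hD, le_mul_of_one_le_left' (one_le_pow₀ hB)⟩
    · obtain ⟨p1, h1, h2⟩ := chain_step hL ha hη hηa (hp1 (by simp : p ∈ _)) hD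
      have h3 : dist p1 q ≤ dist p q := h1.trans (max_le (by linarith) hD)
      obtain ⟨p2, h4, h5⟩ := ih p1 ((closedBall_subset_closedBall h3).trans hp1) (h1.trans (max_le (by
        push_cast at hp2; linarith) (by
          have : (0 : ℝ) ≤ m := by positivity
          nlinarith)))
      refine ⟨p2, h4, h5.trans ?_⟩
      rw [pow_succ, mul_assoc (ENNReal.ofReal (2 * K1 * a / η) ^ m)]
      exact mul_le_mul_right h2 _

lemma cube_lintegral {h : Euc d → ℝ} {P : Set (Euc d)} {a M : ℝ} (hL : LineBd h P a M)
    (ha : 0 < a) (m : ℕ) : ∀ (e : Fin m → Euc d), (∀ i, ‖e i‖ = 1) → ∀ p : Euc d,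
    closedBall p (m * a) ⊆ P →
    ∫⁻ s in Set.pi univ (fun _ : Fin m => Icc (-a) a), (1 + ell M (h (p + ∑ i, s i • e i))) ≤
      ENNReal.ofReal (K1 * a) ^ m * (1 + ell M (h p)) := by
  induction m with
  | zero =>
    intro e he p hp
    refine (setLIntegral_le_lintegral _ _).trans ?_
    simp [volume_pi]
  | succ m ih =>
    intro e he p hp
    have hms : ∀ k : ℕ, MeasurableSet (Set.pi univ (fun _ : Fin k => Icc (-a) a)) := fun k =>
      MeasurableSet.univ_pi fun _ => measurableSet_Icc
    set f : (Fin (m + 1) → ℝ) → ℝ≥0∞ := (Set.pi univ (fun _ : Fin (m + 1) => Icc (-a) a)).indicator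
      (fun s => 1 + ell M (h (p + ∑ i, s i • e i))) with hf
    rw [← lintegral_indicator (hms (m + 1)), ← hf]
    have hmp := volume_preserving_piFinSuccAbove (fun _ : Fin (m + 1) => ℝ) 0
    rw [← hmp.symm.lintegral_comp_emb (MeasurableEquiv.measurableEmbedding _)]
    refine (lintegral_prod_le _).trans ?_
    have hin : ∀ x : ℝ, ∫⁻ s : Fin m → ℝ,
        f ((MeasurableEquiv.piFinSuccAbove (fun _ : Fin (m + 1) => ℝ) 0).symm (x, s)) ≤
        (Icc (-a) a).indicator (fun x => ENNReal.ofReal (K1 * a) ^ m *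
          (1 + ell M (h (p + x • e 0)))) x := by
      intro x
      by_cases hx : x ∈ Icc (-a) a
      · rw [indicator_of_mem hx]
        have h1 := ih (fun i => e i.succ) (fun i => he _) (p + x • e 0) (by
          refine Subset.trans (closedBall_subset_closedBall' ?_) hp
          rw [dist_eq_norm, add_sub_cancel_left, norm_smul, he, mul_one, Real.norm_eq_abs]
          have := abs_le.2 hx
          push_cast
          linarith)
        refine le_trans (le_of_eq ?_) h1
        rw [← lintegral_indicator (hms m)]
        congr 1
        ext s
        have hmem : Fin.cons x s ∈ Set.pi univ (fun _ : Fin (m + 1) => Icc (-a) a) ↔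
            s ∈ Set.pi univ (fun _ : Fin m => Icc (-a) a) := by
          simp only [Set.mem_pi, mem_univ, true_imp_iff]
          rw [Fin.forall_fin_succ]
          simp only [Fin.cons_zero, Fin.cons_succ]
          exact and_iff_right hx
        have hes : (MeasurableEquiv.piFinSuccAbove (fun _ : Fin (m + 1) => ℝ) 0).symm (x, s) =
            (Fin.cons x s : Fin (m + 1) → ℝ) := by
          simp [MeasurableEquiv.piFinSuccAbove, Fin.insertNthEquiv]
        rw [hes, hf]
        by_cases hs : s ∈ Set.pi univ (fun _ : Fin m => Icc (-a) a)
        · rw [indicator_of_mem hs, indicator_of_mem (hmem.2 hs), Fin.sum_univ_succ]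
          simp only [Fin.cons_zero, Fin.cons_succ]
          rw [add_assoc p]
        · rw [indicator_of_notMem hs, indicator_of_notMem (fun h => hs (hmem.1 h))]
      · rw [indicator_of_notMem hx, nonpos_iff_eq_zero]
        have h0 : ∀ s : Fin m → ℝ,
            f ((MeasurableEquiv.piFinSuccAbove (fun _ : Fin (m + 1) => ℝ) 0).symm (x, s)) = 0 := by
          intro s
          have hes : (MeasurableEquiv.piFinSuccAbove (fun _ : Fin (m + 1) => ℝ) 0).symm (x, s) =
              (Fin.cons x s : Fin (m + 1) → ℝ) := by
            simp [MeasurableEquiv.piFinSuccAbove, Fin.insertNthEquiv]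
          rw [hes, hf, indicator_of_notMem]
          intro h1
          exact hx (by simpa using h1 0 (mem_univ _))
        simp_rw [h0]
        exact lintegral_zero
    refine (lintegral_mono hin).trans ?_
    rw [lintegral_indicator measurableSet_Icc, lintegral_const_mul' _ _ (by finiteness)]
    have := hL.lintegral ha (hp (mem_closedBall_self (by positivity))) (he 0)
    rw [pow_succ, mul_assoc]
    gcongr

end

section
variable {n : ℕ}

lemma euc_expand {d : ℕ} (w : Euc d) : w = ∑ i, w i • (EuclideanSpace.single i (1 : ℝ) : Euc d) := by
  ext j
  simp [Finset.sum_apply, Pi.single_apply]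

lemma euc_norm_le_sum {d : ℕ} (w : Euc d) : ‖w‖ ≤ ∑ i, |w i| := by
  conv_lhs => rw [euc_expand w]
  refine (norm_sum_le _ _).trans (le_of_eq ?_)
  simp [norm_smul]

/-- Drop the `j`-th coordinate. -/
def proj (j : Fin (n + 1)) (z : Euc (n + 1)) : Fin n → ℝ := fun i => z (j.succAbove i)

lemma proj_continuous (j : Fin (n + 1)) : Continuous (proj j) := by
  unfold proj; fun_prop

/-- Sets which are graphs over the `j`-th coordinate hyperplane. -/
def GraphLike (j : Fin (n + 1)) (B : Set (Euc (n + 1))) : Prop :=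
  ∀ x ∈ B, ∀ y ∈ B, dist x y ≤ (3 * n + 1 : ℝ≥0) * dist (proj j x) (proj j y)

lemma GraphLike.mono {j : Fin (n + 1)} {A B : Set (Euc (n + 1))} (h : GraphLike j B) (hA : A ⊆ B) :
    GraphLike j A := fun x hx y hy => h x (hA hx) y (hA hy)

lemma GraphLike.injOn {j : Fin (n + 1)} {B : Set (Euc (n + 1))} (h : GraphLike j B) :
    InjOn (proj j) B := by
  intro x hx y hy hxy
  have := h x hx y hy
  rw [hxy, dist_self, mul_zero] at this
  exact dist_le_zero.1 this

lemma GraphLike.measure_le {j : Fin (n + 1)} {B : Set (Euc (n + 1))} (h : GraphLike j B) :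
    μH[(n : ℝ)] B ≤ ((3 * n + 1 : ℝ≥0) : ℝ≥0∞) ^ n * volume (proj j '' B) := by
  have hl : LipschitzOnWith (3 * n + 1 : ℝ≥0) (Function.invFunOn (proj j) B) (proj j '' B) := by
    apply LipschitzOnWith.of_dist_le_mul
    rintro _ ⟨x, hx, rfl⟩ _ ⟨y, hy, rfl⟩
    rw [h.injOn.leftInvOn_invFunOn hx, h.injOn.leftInvOn_invFunOn hy]
    exact h x hx y hy
  have h1 := hl.hausdorffMeasure_image_le (d := (n : ℝ)) (by positivity)
  have h2 : Function.invFunOn (proj j) B '' (proj j '' B) = B := by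
    rw [h.injOn.invFunOn_image subset_rfl]
  have h3 : (μH[(n : ℝ)] : Measure (Fin n → ℝ)) = volume := by
    have := hausdorffMeasure_pi_real (ι := Fin n)
    rwa [Fintype.card_fin] at this
  rw [h2, h3, ENNReal.rpow_natCast] at h1
  exact h1

lemma local_graph {g : Euc (n + 1) → ℝ} {z : Euc (n + 1)} (hg : ContDiffAt ℝ 1 g z)
    (hne : fderiv ℝ g z ≠ 0) :
    ∃ j, ∃ U : Set (Euc (n + 1)), IsOpen U ∧ z ∈ U ∧ GraphLike j ({y | g y = 0} ∩ U) := by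
  set e : Fin (n + 1) → Euc (n + 1) := fun i => EuclideanSpace.single i (1 : ℝ) with he
  set g' := fderiv ℝ g z with hg'
  obtain ⟨j, -, hj⟩ := Finset.exists_max_image Finset.univ (fun i => |g' (e i)|) Finset.univ_nonempty
  have hexp : ∀ w, g' w = ∑ i, w i * g' (e i) := by
    intro w
    conv_lhs => rw [euc_expand w]
    simp [he]
  set b := |g' (e j)| with hb
  have hb0 : 0 < b := by
    rw [hb, abs_pos]
    intro h0
    apply hne
    ext w
    rw [hexp]
    simp only [zero_apply]
    apply Finset.sum_eq_zero
    intro i _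
    have := hj i (Finset.mem_univ _)
    rw [hb, h0, abs_zero] at this
    rw [abs_nonpos_iff.1 this, mul_zero]
  have hst := (hg.hasStrictFDerivAt one_ne_zero).isLittleO.def (show 0 < b / 3 by positivity)
  rw [nhds_prod_eq] at hst
  obtain ⟨t, ht, hmain⟩ := (eventually_prod_self_iff (r := fun p q =>
    ‖g p - g q - fderiv ℝ g z (p - q)‖ ≤ b / 3 * ‖p - q‖)).1 hst
  refine ⟨j, interior t, isOpen_interior, mem_interior_iff_mem_nhds.2 ht, ?_⟩
  rintro x ⟨hx0, hxt⟩ y ⟨hy0, hyt⟩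
  have h1 := hmain x (interior_subset hxt) y (interior_subset hyt)
  simp only [mem_ofPred_eq] at hx0 hy0
  simp only [hx0, hy0, sub_zero, zero_sub, norm_neg] at h1
  rw [dist_eq_norm]
  set w := x - y with hw
  set S := ∑ i, |w (j.succAbove i)| with hS
  have hn1 : ‖w‖ ≤ |w j| + S := by
    have := euc_norm_le_sum w
    rwa [Fin.sum_univ_succAbove _ j] at this
  have h2 : b * |w j| ≤ b * S + b / 3 * ‖w‖ := by
    rw [← hg', hexp w, Fin.sum_univ_succAbove _ j] at h1
    have h3 : |∑ i, w (j.succAbove i) * g' (e (j.succAbove i))| ≤ b * S := by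
      rw [hS, Finset.mul_sum]
      refine (Finset.abs_sum_le_sum_abs _ _).trans (Finset.sum_le_sum fun i _ => ?_)
      rw [abs_mul, mul_comm]
      gcongr
      exact hj _ (Finset.mem_univ _)
    have h4 : |w j * g' (e j)| = b * |w j| := by rw [abs_mul, mul_comm]
    rw [Real.norm_eq_abs] at h1
    rw [← h4]
    have h5 := abs_sub_abs_le_abs_add (w j * g' (e j)) (∑ i, w (j.succAbove i) * g' (e (j.succAbove i)))
    linarith
  have h3 : |w j| ≤ 2 * S := by
    have : b * |w j| ≤ b * S + b / 3 * (|w j| + S) := h2.trans (by gcongr)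
    have h6 : b * |w j| ≤ b * (2 * S) := by linarith
    exact le_of_mul_le_mul_left h6 hb0
  have h4 : S ≤ n * dist (proj j x) (proj j y) := by
    calc S ≤ ∑ _i : Fin n, dist (proj j x) (proj j y) := by
          apply Finset.sum_le_sum
          intro i _
          have := dist_le_pi_dist (proj j x) (proj j y) i
          rw [Real.dist_eq] at this
          exact this
      _ = _ := by simp
  have h5 : (0 : ℝ) ≤ dist (proj j x) (proj j y) := dist_nonneg
  push_cast
  nlinarith

lemma area_bound {W : Set (Euc (n + 1))} (hW : MeasurableSet W) (T : ℕ → Set (Euc (n + 1)))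
    (hT : ∀ m, MeasurableSet (T m)) (hcov : W ⊆ ⋃ m, T m) (hg : ∀ m, ∃ j, GraphLike j (T m)) :
    μH[(n : ℝ)] W ≤ ((3 * n + 1 : ℝ≥0) : ℝ≥0∞) ^ n *
      ∑ j, ∫⁻ y, (({z | z ∈ W ∧ proj j z = y}.encard : ℕ∞) : ℝ≥0∞) := by
  classical
  choose J hJ using hg
  set A : ℕ → Set (Euc (n + 1)) := fun m => disjointed T m ∩ W with hA
  have hAm : ∀ m, MeasurableSet (A m) := fun m => (MeasurableSet.disjointed hT m).inter hW
  have hAg : ∀ m, GraphLike (J m) (A m) := fun m =>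
    (hJ m).mono (inter_subset_left.trans (disjointed_subset T m))
  have hAd : Pairwise (Function.onFun Disjoint A) := fun i k hik =>
    (disjoint_disjointed T hik).mono inter_subset_left inter_subset_left
  have hAW : W ⊆ ⋃ m, A m := by
    intro z hz
    have := hcov hz
    rw [← iUnion_disjointed] at this
    obtain ⟨m, hm⟩ := mem_iUnion.1 this
    exact mem_iUnion.2 ⟨m, hm, hz⟩
  set A' : Fin (n + 1) → ℕ → Set (Euc (n + 1)) := fun j m => if J m = j then A m else ∅ with hA'
  have hA'sub : ∀ j m, A' j m ⊆ A m := by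
    intro j m
    simp only [hA']
    split_ifs
    · exact subset_rfl
    · exact empty_subset _
  have hA'g : ∀ j m, GraphLike j (A' j m) := by
    intro j m
    simp only [hA']
    split_ifs with h
    · rw [← h]; exact hAg m
    · intro x hx; exact absurd hx (notMem_empty x)
  have hA'm : ∀ j m, MeasurableSet (A' j m) := by
    intro j m
    simp only [hA']
    split_ifs with h
    · exact hAm m
    · exact MeasurableSet.empty
  have him : ∀ j m, MeasurableSet (proj j '' A' j m) := fun j m =>
    (hA'm j m).image_of_continuousOn_injOn (proj_continuous j).continuousOn (hA'g j m).injOn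
  have hcount : ∀ j, ∑' m, volume (proj j '' A' j m) ≤
      ∫⁻ y, (({z | z ∈ W ∧ proj j z = y}.encard : ℕ∞) : ℝ≥0∞) := by
    intro j
    calc ∑' m, volume (proj j '' A' j m) = ∑' m, ∫⁻ y, (proj j '' A' j m).indicator 1 y := by
          congr 1; ext m; rw [lintegral_indicator_one (him j m)]
      _ = ∫⁻ y, ∑' m, (proj j '' A' j m).indicator 1 y :=
          (lintegral_tsum fun m => (measurable_one.indicator (him j m)).aemeasurable).symm
      _ ≤ _ := by
        apply lintegral_mono
        intro y
        have h1 : ∑' m, (proj j '' A' j m).indicator (1 : (Fin n → ℝ) → ℝ≥0∞) y =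
            ∑' m, ({m | y ∈ proj j '' A' j m} : Set ℕ).indicator (fun _ => (1 : ℝ≥0∞)) m := by
          congr 1
        dsimp only
        rw [h1, ← tsum_subtype, ENNReal.tsum_set_one]
        rw [ENat.toENNReal_le]
        have hch : ∀ m, ∃ z, y ∈ proj j '' A' j m → z ∈ A' j m ∧ proj j z = y := by
          intro m
          by_cases hm : y ∈ proj j '' A' j m
          · obtain ⟨z, hz, hzy⟩ := hm
            exact ⟨z, fun _ => ⟨hz, hzy⟩⟩
          · exact ⟨0, fun h => absurd h hm⟩
        choose f hf using hch
        apply encard_le_encard_of_injOn (f := f)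
        · intro m hm
          have := hf m hm
          exact ⟨(hA'sub j m this.1).2, this.2⟩
        · intro m hm k hk hmk
          by_contra hne
          have h2 := hA'sub j m (hf m hm).1
          have h3 := hA'sub j k (hf k hk).1
          rw [hmk] at h2
          exact (hAd hne).le_bot ⟨h2, h3⟩
  calc μH[(n : ℝ)] W ≤ μH[(n : ℝ)] (⋃ m, A m) := measure_mono hAW
    _ ≤ ∑' m, μH[(n : ℝ)] (A m) := measure_iUnion_le _
    _ ≤ ∑' m, ((3 * n + 1 : ℝ≥0) : ℝ≥0∞) ^ n * ∑ j, volume (proj j '' A' j m) := by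
        apply ENNReal.tsum_le_tsum
        intro m
        refine (hAg m).measure_le.trans ?_
        gcongr
        refine le_trans (le_of_eq ?_) (Finset.single_le_sum (f := fun j => volume (proj j '' A' j m))
          (fun _ _ => zero_le) (Finset.mem_univ (J m)))
        simp [hA']
    _ = ((3 * n + 1 : ℝ≥0) : ℝ≥0∞) ^ n * ∑ j, ∑' m, volume (proj j '' A' j m) := by
        rw [ENNReal.tsum_mul_left, Summable.tsum_finsetSum (fun _ _ => ENNReal.summable)]
    _ ≤ _ := by
        gcongr with j
        exact hcount j

end

section
variable {n : ℕ}

lemma graph_cover {Ω : Set (Euc (n + 1))} (hΩ : IsOpen Ω) {g : Euc (n + 1) → ℝ} (hg : MVP Ω g)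
    {Q : Set (Euc (n + 1))} (hQ : IsClosed Q) (hQΩ : Q ⊆ Ω) :
    ∃ 𝒯 : Set (Set (Euc (n + 1))), 𝒯.Countable ∧
      (∀ B ∈ 𝒯, MeasurableSet B ∧ ∃ j, GraphLike j B) ∧
      {z | z ∈ Q ∧ g z = 0 ∧ fderiv ℝ g z ≠ 0} ⊆ ⋃₀ 𝒯 := by
  set S := {z | z ∈ Q ∧ g z = 0 ∧ fderiv ℝ g z ≠ 0} with hS
  have hloc : ∀ z, ∃ U : Set (Euc (n + 1)), z ∈ S → (IsOpen U ∧ z ∈ U ∧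
      ∃ j, GraphLike j ({y | g y = 0} ∩ U)) := by
    intro z
    by_cases hz : z ∈ S
    · obtain ⟨j, U, hU, hzU, hgr⟩ := local_graph
        ((mvp_contDiffOn hΩ hg).contDiffAt (hΩ.mem_nhds (hQΩ hz.1))) hz.2.2
      exact ⟨U, fun _ => ⟨hU, hzU, j, hgr⟩⟩
    · exact ⟨∅, fun h => absurd h hz⟩
  choose U hU using hloc
  obtain ⟨t, htS, htc, hcov⟩ := TopologicalSpace.countable_cover_nhdsWithin (f := U) (s := S)
    (fun z hz => mem_nhdsWithin_of_mem_nhds ((hU z hz).1.mem_nhds (hU z hz).2.1))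
  have hcl : IsClosed (Q ∩ g ⁻¹' {0}) :=
    (hg.1.mono hQΩ).preimage_isClosed_of_isClosed hQ isClosed_singleton
  refine ⟨(fun z => (Q ∩ g ⁻¹' {0}) ∩ U z) '' t, htc.image _, ?_, ?_⟩
  · rintro _ ⟨z, hz, rfl⟩
    obtain ⟨h1, -, j, h3⟩ := hU z (htS hz)
    refine ⟨hcl.measurableSet.inter h1.measurableSet, j, h3.mono ?_⟩
    rintro y ⟨⟨_, hy⟩, hyU⟩
    exact ⟨hy, hyU⟩
  · intro z hz
    obtain ⟨w, hw, hzw⟩ := mem_iUnion₂.1 (hcov hz)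
    exact ⟨_, ⟨w, hw, rfl⟩, ⟨hz.1, hz.2.1⟩, hzw⟩

lemma cube_nodal {Ω : Set (Euc (n + 1))} (hΩ : IsOpen Ω) (hc : IsConnected Ω)
    {h : Euc (n + 1) → ℝ} (hh : MVP Ω h) (hne : ∃ y ∈ Ω, h y ≠ 0) {P : Set (Euc (n + 1))} {a M : ℝ}
    (hL : LineBd h P a M) (ha : 0 < a) (hPΩ : P ⊆ Ω) {p : Euc (n + 1)}
    (hp : closedBall p ((n + 1) * a) ⊆ P) :
    μH[(n : ℝ)] {z | (∀ i, |z i - p i| ≤ a) ∧ h z = 0} ≤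
      ((3 * n + 1 : ℝ≥0) : ℝ≥0∞) ^ n * ((n + 1 : ℕ) *
        (ENNReal.ofReal (K1 * a) ^ n * (1 + ell M (h p)))) := by
  set e : Fin (n + 1) → Euc (n + 1) := fun i => EuclideanSpace.single i (1 : ℝ) with he
  have hen : ∀ i, ‖e i‖ = 1 := fun i => by simp [he]
  set Q : Set (Euc (n + 1)) := {z | ∀ i, |z i - p i| ≤ a} with hQdef
  have hQc : IsClosed Q := by
    rw [hQdef, ofPred_forall]
    exact isClosed_iInter fun i => isClosed_le (by fun_prop) continuous_const
  have hQP : Q ⊆ P := by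
    intro z hz
    apply hp
    rw [mem_closedBall, dist_eq_norm]
    refine (euc_norm_le_sum _).trans ?_
    calc ∑ i, |(z - p) i| ≤ ∑ _i : Fin (n + 1), a := Finset.sum_le_sum fun i _ => hz i
      _ = (n + 1) * a := by simp
  have hQΩ : Q ⊆ Ω := hQP.trans hPΩ
  set W : Set (Euc (n + 1)) := {z | (∀ i, |z i - p i| ≤ a) ∧ h z = 0} with hW
  have hWm : MeasurableSet W := by
    have : W = Q ∩ h ⁻¹' {0} := rfl
    rw [this]
    exact ((hh.1.mono hQΩ).preimage_isClosed_of_isClosed hQc isClosed_singleton).measurableSet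
  have hcovs : ∀ ik : ℕ × ℕ, _ := fun ik => graph_cover hΩ
    (Dk_mvp hΩ hh (TopologicalSpace.denseSeq (Euc (n + 1)) ik.1) ik.2) hQc hQΩ
  choose 𝒯 h𝒯c h𝒯g h𝒯cov using hcovs
  obtain ⟨T, hT⟩ := ((countable_singleton (∅ : Set (Euc (n + 1)))).union
    (countable_iUnion h𝒯c)).exists_eq_range ⟨∅, Or.inl rfl⟩
  have hTg : ∀ m, MeasurableSet (T m) ∧ ∃ j, GraphLike j (T m) := by
    intro m
    have : T m ∈ range T := ⟨m, rfl⟩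
    rw [← hT] at this
    rcases this with h1 | h1
    · rw [mem_singleton_iff] at h1
      rw [h1]
      exact ⟨MeasurableSet.empty, 0, fun x hx => absurd hx (notMem_empty x)⟩
    · obtain ⟨ik, hik⟩ := mem_iUnion.1 h1
      exact h𝒯g ik _ hik
  have hWT : W ⊆ ⋃ m, T m := by
    intro z hz
    obtain ⟨i, k, h1, h2⟩ := exists_regular hΩ hc hh hne (hQΩ hz.1) hz.2
    obtain ⟨B, hB, hzB⟩ := h𝒯cov (i, k) ⟨hz.1, h1, h2⟩
    have : B ∈ range T := by
      rw [← hT]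
      exact Or.inr (mem_iUnion.2 ⟨(i, k), hB⟩)
    obtain ⟨m, rfl⟩ := this
    exact mem_iUnion.2 ⟨m, hzB⟩
  refine (area_bound hWm T (fun m => (hTg m).1) hWT (fun m => (hTg m).2)).trans ?_
  gcongr
  have hj : ∀ j : Fin (n + 1), ∫⁻ y, (({z | z ∈ W ∧ proj j z = y}.encard : ℕ∞) : ℝ≥0∞) ≤
      ENNReal.ofReal (K1 * a) ^ n * (1 + ell M (h p)) := by
    intro j
    have hcube := cube_lintegral hL ha n (fun i => e (j.succAbove i)) (fun i => hen _) p
      ((closedBall_subset_closedBall (by nlinarith)).trans hp)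
    refine le_trans ?_ hcube
    rw [← lintegral_indicator (MeasurableSet.univ_pi fun _ => measurableSet_Icc)]
    refine le_trans ?_ (lintegral_sub_right_eq_self _ (proj j p)).le
    apply lintegral_mono
    intro y
    dsimp only
    have hzexp : ∀ z, proj j z = y →
        z = (p + ∑ i, (y - proj j p) i • e (j.succAbove i)) + (z j - p j) • e j := by
      intro z hz
      have h1 := euc_expand (z - p)
      rw [Fin.sum_univ_succAbove _ j] at h1
      have h2 : z = p + (z - p) := by abel
      rw [h1] at h2
      rw [← hz]
      conv_lhs => rw [h2]
      simp only [he, proj, Pi.sub_apply, PiLp.sub_apply]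
      abel
    by_cases hy : (y - proj j p) ∈ Set.pi univ (fun _ : Fin n => Icc (-a) a)
    · rw [indicator_of_mem hy]
      set b := p + ∑ i, (y - proj j p) i • e (j.succAbove i) with hb
      have hbP : b ∈ P := by
        apply hp
        rw [mem_closedBall, dist_eq_norm, hb, add_sub_cancel_left]
        refine (norm_sum_le _ _).trans ?_
        calc ∑ i, ‖(y - proj j p) i • e (j.succAbove i)‖ ≤ ∑ _i : Fin n, a := by
              apply Finset.sum_le_sum
              intro i _
              rw [norm_smul, hen, mul_one, Real.norm_eq_abs]
              exact abs_le.2 (hy i (mem_univ _))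
          _ = n * a := by simp
          _ ≤ _ := by nlinarith
      obtain ⟨F, hF, hF0⟩ := hL b hbP (e j) (hen j)
      have hz := hF.zeros_encard ha
      rw [hF0 0, zero_smul, add_zero] at hz
      refine le_trans ?_ (hz.trans le_add_self)
      rw [ENat.toENNReal_le]
      apply encard_le_encard_of_injOn (f := fun z : Euc (n + 1) => z j - p j)
      · rintro z ⟨hzW, hzy⟩
        refine ⟨abs_le.1 (hzW.1 j), ?_⟩
        rw [hF0, ← hzexp z hzy]
        exact hzW.2
      · rintro z ⟨_, hzy⟩ z' ⟨_, hzy'⟩ hzz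
        rw [hzexp z hzy, hzexp z' hzy']
        dsimp only at hzz
        rw [hzz]
    · rw [indicator_of_notMem hy]
      have : {z | z ∈ W ∧ proj j z = y} = ∅ := by
        ext z
        simp only [mem_ofPred_eq, mem_empty_iff_false, iff_false, not_and]
        intro hz hzy
        apply hy
        intro i _
        rw [← hzy]
        exact abs_le.1 (hz.1 (j.succAbove i))
      rw [this]
      simp
  calc _ ≤ ∑ _j : Fin (n + 1), ENNReal.ofReal (K1 * a) ^ n * (1 + ell M (h p)) :=
        Finset.sum_le_sum fun j _ => hj j
    _ = _ := by simp

end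

section
variable {d : ℕ}

lemma sup_L2 {Ω : Set (Euc d)} (hΩ : IsOpen Ω) {h : Euc d → ℝ} (hh : MVP Ω h) {y : Euc d} {R : ℝ}
    (hR : 0 < R) (hsub : closedBall y (2 * R) ⊆ Ω) :
    c0 d * h y ^ 2 ≤ (R ^ d)⁻¹ * ∫ z in ball y R, h z ^ 2 := by
  obtain ⟨w, hw, -, hwu, -⟩ := exists_cutoff 0 h Ω hΩ (contDiffOn_zero.2 hh.1) y R (2 * R)
    hR (by linarith) hsub
  have hwc : Continuous w := hw.continuous
  have hphi : Continuous (phi : Euc d → ℝ) := phi_contDiff.continuous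
  have hmean : ∫ z, w (y + R • z) * phi z = c0 d * h y := by
    rw [integral_congr_phi hR.le le_rfl hwu]
    exact hh.2 y R hR hsub
  have hi1 : Integrable fun z => w (y + R • z) ^ 2 * phi z :=
    Continuous.integrable_of_hasCompactSupport (by fun_prop) phi_compact.mul_left
  have hi2 : Integrable fun z => w (y + R • z) * phi z :=
    Continuous.integrable_of_hasCompactSupport (by fun_prop) phi_compact.mul_left
  have hi3 : Integrable fun z => w (y + R • z) ^ 2 * phi z - 2 * h y * (w (y + R • z) * phi z) :=
    hi1.sub (hi2.const_mul _)
  have hpos : 0 ≤ ∫ z, (w (y + R • z) - h y) ^ 2 * phi z :=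
    integral_nonneg fun z => mul_nonneg (sq_nonneg _) (phi_nonneg z)
  have hexp : ∫ z, (w (y + R • z) - h y) ^ 2 * phi z =
      (∫ z, w (y + R • z) ^ 2 * phi z) - 2 * h y * (c0 d * h y) + h y ^ 2 * c0 d := by
    rw [← hmean, c0, ← integral_const_mul, ← integral_const_mul, ← integral_sub hi1 (hi2.const_mul _),
      ← integral_add hi3 (phi_integrable.const_mul _)]
    congr 1
    ext z
    ring
  have h1 : c0 d * h y ^ 2 ≤ ∫ z, w (y + R • z) ^ 2 * phi z := by nlinarith
  set G : Euc d → ℝ := (ball y R).indicator fun z => h z ^ 2 with hG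
  have hGi : Integrable G := by
    rw [hG, integrable_indicator_iff measurableSet_ball]
    apply IntegrableOn.mono_set _ ball_subset_closedBall
    apply ContinuousOn.integrableOn_compact (isCompact_closedBall y R)
    exact (hh.1.mono ((closedBall_subset_closedBall (by linarith)).trans hsub)).pow 2
  have hG2 : Integrable fun z => G (y + R • z) :=
    (hGi.comp_add_left y).comp_smul hR.ne'
  have hG0 : ∀ z, 0 ≤ G z := fun z => indicator_nonneg (fun _ _ => sq_nonneg _) z
  have h2 : ∫ z, w (y + R • z) ^ 2 * phi z ≤ ∫ z, G (y + R • z) := by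
    apply integral_mono hi1 hG2
    intro z
    by_cases hz : 1 ≤ ‖z‖
    · simp only [phi_zero_of hz, mul_zero]
      exact hG0 _
    · push Not at hz
      have hm : y + R • z ∈ ball y R := by
        rw [mem_ball, dist_eq_norm, add_sub_cancel_left, norm_smul, Real.norm_of_nonneg hR.le]
        exact mul_lt_of_lt_one_right hR hz
      simp only [hG]
      rw [indicator_of_mem hm, hwu _ (ball_subset_closedBall hm)]
      exact mul_le_of_le_one_right (sq_nonneg _) (phi_le_one z)
  have h3 : ∫ z, G (y + R • z) = (R ^ d)⁻¹ * ∫ z in ball y R, h z ^ 2 := by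
    rw [Measure.integral_comp_smul volume (fun z => G (y + z)) R, integral_add_left_eq_self,
      integral_indicator measurableSet_ball, smul_eq_mul, abs_of_nonneg (by positivity)]
    simp [Euc]
  linarith

lemma lineBd_of {Ω : Set (Euc d)} (hΩ : IsOpen Ω) {h : Euc d → ℝ} (hh : MVP Ω h) {A : ℝ}
    (hA : 0 < A) (hAb : ∀ (Ω : Set (Euc d)), IsOpen Ω →
    ∀ u : Euc d → ℝ, MVP Ω u → ∀ (v x₀ : Euc d) (R M : ℝ), 0 < R → closedBall x₀ R ⊆ Ω →
    (∀ y ∈ closedBall x₀ R, |u y| ≤ M) → ∀ k : ℕ,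
    |Dk v u k x₀| ≤ M * k.factorial * (A * ‖v‖ / R) ^ k) {x : Euc d} {r a M : ℝ} (hr : 0 < r)
    (ha : 0 < a) (ha1 : a ≤ r / 2) (ha2 : 3 * a * A ≤ r) (hsub : closedBall x (15 / 2 * r) ⊆ Ω)
    (hM : ∀ y ∈ closedBall x (15 / 2 * r), |h y| ≤ M) :
    LineBd h (closedBall x (6 * r)) a M := by
  intro y hy v hv
  have hM0 : 0 ≤ M := (abs_nonneg _).trans (hM x (mem_closedBall_self (by positivity)))
  have hin : ∀ t ∈ Icc (-a) a, closedBall (y + t • v) r ⊆ closedBall x (15 / 2 * r) := by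
    intro t ht
    apply closedBall_subset_closedBall'
    have h1 : dist (y + t • v) y ≤ a := by
      rw [dist_eq_norm, add_sub_cancel_left, norm_smul, hv, mul_one, Real.norm_eq_abs]
      exact abs_le.2 ht
    have h2 := dist_triangle (y + t • v) y x
    rw [mem_closedBall] at hy
    linarith
  refine ⟨fun k t => Dk v h k (y + t • v), ⟨?_, ?_⟩, fun t => rfl⟩
  · intro k t ht
    exact Dk_hasDerivAt hΩ hh v k y t (hsub (hin t ht (mem_closedBall_self hr.le)))
  · intro k t ht
    refine (hAb Ω hΩ h hh v _ r M hr ((hin t ht).trans hsub) (fun z hz => hM z (hin t ht hz)) k).trans ?_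
    rw [hv, mul_one, div_eq_mul_inv (M * (k.factorial : ℝ)), ← inv_pow]
    apply mul_le_mul_of_nonneg_left _ (by positivity)
    apply pow_le_pow_left₀ (by positivity)
    rw [div_le_iff₀ hr, inv_mul_eq_div, le_div_iff₀ (by positivity)]
    linarith

end

lemma Hfun_eq {n : ℕ} {Ω : Set (Euc (n + 1))} {h : Euc (n + 1) → ℝ} {x : Euc (n + 1)} {s : ℝ}
    (hs : ball x s ⊆ Ω) : Hfun Ω h x s = ∫ y in ball x s, h y ^ 2 := by
  unfold Hfun
  rw [inter_eq_self_of_subset_left hs]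


lemma norm_const_data {n : ℕ} {Ω : Set (Euc (n + 1))} (hΩ : IsOpen Ω) (hc : IsConnected Ω)
    {h : Euc (n + 1) → ℝ} (hh : MVP Ω h) (hne : ∃ y ∈ Ω, h y ≠ 0) {x : Euc (n + 1)} {r : ℝ}
    (hr : 0 < r) (hsub : closedBall x (8 * r) ⊆ Ω) :
    ∃ (M : ℝ) (p : Euc (n + 1)), (∀ y ∈ closedBall x (15 / 2 * r), |h y| ≤ M) ∧
      p ∈ closedBall x (4 * r) ∧ 0 ≤ Nfun Ω h x (4 * r) ∧
      1 + ell M (h p) ≤ ENNReal.ofReal ((1 + |Real.log (volume.real (ball (0 : Euc (n + 1)) 1) *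
        16 ^ (n + 1) / c0 (n + 1))|) * (Nfun Ω h x (4 * r) + 1)) := by
  have hc0 := c0_pos (d := n + 1)
  set V := volume.real (ball (0 : Euc (n + 1)) 1) with hV
  have hV0 : 0 < V := by
    rw [hV, measureReal_def]
    exact ENNReal.toReal_pos (measure_ball_pos _ _ one_pos).ne' measure_ball_lt_top.ne
  have h4sub : closedBall x (4 * r) ⊆ Ω :=
    (closedBall_subset_closedBall (by linarith)).trans hsub
  have hE4 : Hfun Ω h x (4 * r) = ∫ y in ball x (4 * r), h y ^ 2 :=
    Hfun_eq (ball_subset_closedBall.trans h4sub)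
  have hE8 : Hfun Ω h x (2 * (4 * r)) = ∫ y in ball x (8 * r), h y ^ 2 := by
    rw [show 2 * (4 * r) = 8 * r by ring]
    exact Hfun_eq (ball_subset_closedBall.trans hsub)
  have hintg : IntegrableOn (fun y => h y ^ 2) (ball x (8 * r)) :=
    (ContinuousOn.integrableOn_compact (isCompact_closedBall x (8 * r))
      ((hh.1.mono hsub).pow 2)).mono_set ball_subset_closedBall
  have hmono : ∀ (y : Euc (n + 1)) (s R : ℝ), R ≤ 8 * r → ball y s ⊆ ball x R →
      ∫ z in ball y s, h z ^ 2 ≤ ∫ z in ball x R, h z ^ 2 := by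
    intro y s R hR hs
    exact setIntegral_mono_set (hintg.mono_set (ball_subset_ball hR))
      (ae_of_all _ fun z => sq_nonneg _) hs.eventuallyLE
  set H8 := Hfun Ω h x (2 * (4 * r)) with hH8
  set H4 := Hfun Ω h x (4 * r) with hH4
  have h48 : H4 ≤ H8 := by
    rw [hE4, hE8]
    exact hmono x (4 * r) (8 * r) le_rfl (ball_subset_ball (by linarith))
  -- positivity of the smaller integral
  have hH4pos : 0 < H4 := by
    have hxΩ : x ∈ Ω := h4sub (mem_closedBall_self (by positivity))
    have hex : ∃ y ∈ ball x (4 * r), h y ≠ 0 := by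
      by_contra hcon
      push Not at hcon
      obtain ⟨i, k, hik⟩ := exists_nonflat hΩ hc hh hne hxΩ
      have h0 : h =ᶠ[𝓝 x] 0 := by
        filter_upwards [ball_mem_nhds x (show 0 < 4 * r by positivity)] with y hy
        exact hcon y hy
      exact hik (Dk_eventually_zero h0 _ k).eq_of_nhds
    obtain ⟨y, hy, hy0⟩ := hex
    obtain ⟨ε, hε, hεs⟩ := Metric.nhds_basis_closedBall.mem_iff.1 (isOpen_ball.mem_nhds hy)
    have h1 := sup_L2 hΩ hh (y := y) (R := ε / 2) (by positivity)
      (by rw [show 2 * (ε / 2) = ε by ring]; exact hεs.trans (ball_subset_closedBall.trans h4sub))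
    have h2 : ∫ z in ball y (ε / 2), h z ^ 2 ≤ H4 := by
      rw [hE4]
      refine hmono _ _ _ (by linarith) ?_
      exact (ball_subset_closedBall.trans (closedBall_subset_closedBall (by linarith))).trans hεs
    have h3 : 0 < c0 (n + 1) * h y ^ 2 := by positivity
    have h4 : 0 < ∫ z in ball y (ε / 2), h z ^ 2 := by
      by_contra hcon
      push Not at hcon
      have : (((ε / 2) ^ (n + 1))⁻¹) * ∫ z in ball y (ε / 2), h z ^ 2 ≤ 0 :=
        mul_nonpos_of_nonneg_of_nonpos (by positivity) hcon
      linarith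
    linarith
  have hH8pos : 0 < H8 := by linarith
  obtain ⟨p, hp, hpmax⟩ := (isCompact_closedBall x (4 * r)).exists_isMaxOn
    ⟨x, mem_closedBall_self (by positivity)⟩ ((hh.1.mono h4sub).abs)
  have hpm : ∀ y ∈ closedBall x (4 * r), |h y| ≤ |h p| := fun y hy => hpmax hy
  have hH4le : H4 ≤ h p ^ 2 * ((4 * r) ^ (n + 1) * V) := by
    rw [hE4]
    have hvol : volume.real (ball x (4 * r)) = (4 * r) ^ (n + 1) * V := by
      rw [hV, measureReal_def, measureReal_def, Measure.addHaar_ball_of_pos _ _ (by positivity),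
        ENNReal.toReal_mul, ENNReal.toReal_ofReal (by positivity)]
      simp [Euc]
    rw [← hvol]
    refine (le_abs_self _).trans ?_
    rw [← Real.norm_eq_abs]
    refine norm_setIntegral_le_of_norm_le_const measure_ball_lt_top ?_
    intro y hy
    rw [Real.norm_of_nonneg (sq_nonneg _)]
    exact sq_le_sq.2 (hpm y (ball_subset_closedBall hy))
  have hp0 : h p ≠ 0 := by
    intro h0
    rw [h0] at hH4le
    simp at hH4le
    linarith
  set M := √(H8 / ((r / 4) ^ (n + 1) * c0 (n + 1))) with hM
  have hM0 : 0 < M := Real.sqrt_pos.2 (by positivity)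
  have hN0 : 0 ≤ Nfun Ω h x (4 * r) := by
    unfold Nfun
    exact Real.log_nonneg ((one_le_div hH4pos).2 h48)
  refine ⟨M, p, ?_, hp, hN0, ?_⟩
  · intro y hy
    apply Real.abs_le_sqrt
    rw [mem_closedBall] at hy
    have h1 := sup_L2 hΩ hh (y := y) (R := r / 4) (by positivity)
      ((closedBall_subset_closedBall' (by linarith)).trans hsub)
    have h2 : ∫ z in ball y (r / 4), h z ^ 2 ≤ H8 := by
      rw [hE8]
      exact hmono _ _ _ le_rfl (ball_subset_ball' (by linarith))
    rw [le_div_iff₀ (by positivity)]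
    have h3 : (0 : ℝ) < (r / 4) ^ (n + 1) := by positivity
    rw [inv_mul_eq_div, le_div_iff₀ h3] at h1
    linarith
  · have hhp : 0 < |h p| := abs_pos.2 hp0
    set Q := V * 16 ^ (n + 1) / c0 (n + 1) with hQ
    have hQ0 : 0 < Q := by positivity
    have hsq : (M / |h p|) ^ 2 ≤ H8 / H4 * Q := by
      rw [div_pow, sq_abs, hM, Real.sq_sqrt (by positivity), hQ, div_div, div_mul_div_comm,
        div_le_div_iff₀ (by positivity) (by positivity)]
      have e : (16 : ℝ) ^ (n + 1) * (r / 4) ^ (n + 1) = (4 * r) ^ (n + 1) := by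
        rw [← mul_pow]; congr 1; ring
      calc H8 * (H4 * c0 (n + 1)) ≤ H8 * (h p ^ 2 * ((4 * r) ^ (n + 1) * V) * c0 (n + 1)) := by
            gcongr
        _ = _ := by rw [← e]; ring
    have hlog : 2 * Real.log (M / |h p|) ≤ Nfun Ω h x (4 * r) + Real.log Q := by
      have := Real.log_le_log (by positivity) hsq
      rw [Real.log_pow, Real.log_mul (by positivity) (by positivity)] at this
      exact_mod_cast this
    have hl2 : Real.log (M / |h p|) ≤ Nfun Ω h x (4 * r) + |Real.log Q| := by
      have h1 := le_abs_self (Real.log Q)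
      have h2 := abs_nonneg (Real.log Q)
      linarith
    unfold ell
    rw [if_neg hp0]
    have hA := abs_nonneg (Real.log Q)
    calc 1 + ENNReal.ofReal (Real.log (M / |h p|))
        ≤ ENNReal.ofReal 1 + ENNReal.ofReal (Nfun Ω h x (4 * r) + |Real.log Q|) := by
          rw [ENNReal.ofReal_one]
          gcongr
      _ = ENNReal.ofReal (1 + (Nfun Ω h x (4 * r) + |Real.log Q|)) :=
          (ENNReal.ofReal_add (by norm_num) (by positivity)).symm
      _ ≤ _ := by
          apply ENNReal.ofReal_le_ofReal
          have := mul_nonneg hA hN0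
          linarith

/-- Interior nodal set bound of Donnelly–Fefferman type for
harmonic functions: `ℋ^n(Z(h) ∩ B(x,r)) ≤ C (N_h(x,4r) + 1) r^n` whenever
`B(x,8r)` has closure contained in `Ω`; `C = C(n)`. -/
theorem nodal_bound_interior_balls {n : ℕ} :
    ∃ C : ℝ, 0 < C ∧ ∀ Ω : Set (Euc (n + 1)), IsOpen Ω → IsConnected Ω →
      ∀ h : Euc (n + 1) → ℝ, HarmonicOn h Ω → (∃ y ∈ Ω, h y ≠ 0) →
      ∀ (x : Euc (n + 1)) (r : ℝ), 0 < r → closure (ball x (8 * r)) ⊆ Ω →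
        μH[(n : ℝ)] (zeroSet Ω h ∩ ball x r) ≤
          ENNReal.ofReal (C * (Nfun Ω h x (4 * r) + 1) * r ^ n) := by
  obtain ⟨A, hA, hAb⟩ := exists_Dk_const (n + 1)
  have hK := K1_ge
  set κ : ℝ := 1 / (3 * A + 2 * (n + 1)) with hκ
  have hκ0 : 0 < κ := by positivity
  have hκ1 : κ * (3 * A + 2 * (n + 1)) = 1 := by
    rw [hκ]; field_simp
  have hκA : 3 * κ * A ≤ 1 := by
    have : 0 ≤ κ * (2 * (n + 1)) := by positivity
    nlinarith
  have hκn : (n + 1) * κ ≤ 1 / 2 := by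
    have : 0 ≤ κ * (3 * A) := by positivity
    nlinarith
  have hκh : κ ≤ 1 / 2 := by
    have : 0 ≤ (n : ℝ) * κ := by positivity
    linarith
  obtain ⟨t, hts, htf, htc⟩ := (isCompact_closedBall (0 : Euc (n + 1)) 1).finite_cover_balls
    (show 0 < κ / 2 by positivity)
  set m := ⌈10 / κ⌉₊ with hm
  have hmκ : 10 ≤ m * κ := by
    have := Nat.le_ceil (10 / κ)
    rwa [div_le_iff₀ hκ0] at this
  set E := |Real.log (volume.real (ball (0 : Euc (n + 1)) 1) * 16 ^ (n + 1) / c0 (n + 1))| with hE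
  have hE0 : 0 ≤ E := abs_nonneg _
  set B : ℝ := (3 * n + 1) ^ n * ((n + 1) * ((K1 * κ) ^ n * ((4 * K1) ^ m * (1 + E)))) with hB
  have hB0 : 0 < B := by positivity
  refine ⟨htf.toFinset.card * B + 1, by positivity, ?_⟩
  intro Ω hΩ hc h hharm hne x r hr hcl
  have hh : MVP Ω h := harmonic_mvp h Ω hΩ hharm
  rw [closure_ball x (by positivity)] at hcl
  obtain ⟨M, p, hM, hp, hN0, hell⟩ := norm_const_data hΩ hc hh hne hr hcl
  rw [← hE] at hell
  set N := Nfun Ω h x (4 * r) with hN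
  have ha : 0 < κ * r := by positivity
  have hL : LineBd h (closedBall x (6 * r)) (κ * r) M :=
    lineBd_of hΩ hh hA hAb hr ha (by nlinarith) (by nlinarith)
      ((closedBall_subset_closedBall (by linarith)).trans hcl) hM
  have hPΩ : closedBall x (6 * r) ⊆ Ω := (closedBall_subset_closedBall (by linarith)).trans hcl
  rw [mem_closedBall] at hp
  have hcell : ∀ z ∈ htf.toFinset, μH[(n : ℝ)] (zeroSet Ω h ∩ ball (x + r • z) (κ * r / 2)) ≤
      ENNReal.ofReal (B * (N + 1) * r ^ n) := by
    intro z hz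
    have hz1 : ‖z‖ ≤ 1 := by
      have := hts (htf.mem_toFinset.1 hz)
      rwa [mem_closedBall, dist_zero_right] at this
    set q := x + r • z with hq
    have hqx : dist q x ≤ r := by
      rw [hq, dist_eq_norm, add_sub_cancel_left, norm_smul, Real.norm_of_nonneg hr.le]
      exact mul_le_of_le_one_right hr.le hz1
    have hpq : dist p q ≤ 5 * r := by
      have := dist_triangle_right p q x
      linarith
    obtain ⟨p', hp', hp'e⟩ := chain hL ha (η := κ * r / 2) (by positivity) (by linarith) q m p
      (closedBall_subset_closedBall' (by linarith)) (by nlinarith)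
    have hratio : 2 * K1 * (κ * r) / (κ * r / 2) = 4 * K1 := by
      field_simp
      ring
    rw [hratio] at hp'e
    have hnk : ((n : ℝ) + 1) * (κ * r) ≤ r / 2 := by nlinarith
    have hkr : κ * r ≤ r / 2 := by nlinarith
    have hcube := cube_nodal hΩ hc hh hne hL ha hPΩ (p := p')
      (closedBall_subset_closedBall' (by
        have := dist_triangle p' q x
        linarith))
    have hsubset : zeroSet Ω h ∩ ball q (κ * r / 2) ⊆
        {z | (∀ i, |z i - p' i| ≤ κ * r) ∧ h z = 0} := by
      rintro w ⟨hw, hwq⟩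
      refine ⟨fun i => ?_, hw.2⟩
      have h1 : |w i - p' i| ≤ dist w p' := by
        rw [dist_eq_norm]
        exact PiLp.norm_apply_le (w - p') i
      have h2 := dist_triangle_right w p' q
      rw [mem_ball] at hwq
      linarith
    refine (measure_mono hsubset).trans (hcube.trans ?_)
    calc _ ≤ ((3 * n + 1 : ℝ≥0) : ℝ≥0∞) ^ n * ((n + 1 : ℕ) *
          (ENNReal.ofReal (K1 * (κ * r)) ^ n * (ENNReal.ofReal (4 * K1) ^ m *
            ENNReal.ofReal ((1 + E) * (N + 1))))) := by
          gcongr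
          exact hp'e.trans (by gcongr)
      _ = ENNReal.ofReal ((3 * n + 1) ^ n * ((n + 1) * ((K1 * (κ * r)) ^ n * ((4 * K1) ^ m *
            ((1 + E) * (N + 1)))))) := by
          have e1 : ((3 * n + 1 : ℝ≥0) : ℝ≥0∞) = ENNReal.ofReal (3 * n + 1) := by
            rw [ENNReal.ofReal, ENNReal.coe_inj]
            ext
            rw [Real.coe_toNNReal _ (by positivity)]
            push_cast
            rfl
          have e2 : ((n + 1 : ℕ) : ℝ≥0∞) = ENNReal.ofReal (n + 1) := by
            rw [← ENNReal.ofReal_natCast]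
            push_cast
            rfl
          rw [e1, e2, ← ENNReal.ofReal_pow (by positivity), ← ENNReal.ofReal_pow (by positivity),
            ← ENNReal.ofReal_pow (by positivity), ← ENNReal.ofReal_mul (by positivity),
            ← ENNReal.ofReal_mul (by positivity), ← ENNReal.ofReal_mul (by positivity),
            ← ENNReal.ofReal_mul (by positivity)]
      _ = _ := by
          congr 1
          rw [hB]
          ring
  have hcover : zeroSet Ω h ∩ ball x r ⊆
      ⋃ z ∈ htf.toFinset, zeroSet Ω h ∩ ball (x + r • z) (κ * r / 2) := by
    rintro w ⟨hw, hwx⟩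
    rw [mem_ball, dist_eq_norm] at hwx
    have h1 : r⁻¹ • (w - x) ∈ closedBall (0 : Euc (n + 1)) 1 := by
      rw [mem_closedBall, dist_zero_right, norm_smul, norm_inv, Real.norm_of_nonneg hr.le,
        inv_mul_le_iff₀ hr]
      linarith
    obtain ⟨z, hz, hwz⟩ := mem_iUnion₂.1 (htc h1)
    refine mem_iUnion₂.2 ⟨z, htf.mem_toFinset.2 hz, hw, ?_⟩
    rw [mem_ball, dist_eq_norm] at hwz ⊢
    have e : w - (x + r • z) = r • (r⁻¹ • (w - x) - z) := by
      rw [smul_sub, smul_inv_smul₀ hr.ne']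
      abel
    rw [e, norm_smul, Real.norm_of_nonneg hr.le]
    nlinarith
  calc μH[(n : ℝ)] (zeroSet Ω h ∩ ball x r)
      ≤ ∑ z ∈ htf.toFinset, μH[(n : ℝ)] (zeroSet Ω h ∩ ball (x + r • z) (κ * r / 2)) :=
        (measure_mono hcover).trans (measure_biUnion_finset_le _ _)
    _ ≤ htf.toFinset.card • ENNReal.ofReal (B * (N + 1) * r ^ n) := Finset.sum_le_card_nsmul _ _ _ hcell
    _ = ENNReal.ofReal (htf.toFinset.card * (B * (N + 1) * r ^ n)) := by
        rw [nsmul_eq_mul, ← ENNReal.ofReal_natCast, ← ENNReal.ofReal_mul (by positivity)]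
    _ ≤ _ := by
        apply ENNReal.ofReal_le_ofReal
        have : 0 ≤ (N + 1) * r ^ n := by positivity
        linarith


end NodalNeumann
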